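/- arXiv:0811.1574 — 3 statements merged into one kernel-verified Lean document; each statement's English description precedes it below -/
import Mathlib

section
/- Let k be a field, A an associative unital k-algebra, and I a two-sided ideal of A with I·I = I (an idempotent ideal). Let M and N be right A/I-modules with M finitely generated, regarded also as right A-modules via the projection A → A/I. Then there is an isomorphism Ext¹_A(M, N) ≅ Ext¹_{A/I}(M, N). -/
open CategoryTheory Limits Category Projective

section
variable {C : Type*} [Category C] [Abelian C] [EnoughProjectives C]

lemma syz_d_comp {P Z : C} (p : P ⟶ Z) : Projective.d p ≫ p = 0 :=
  (assoc (Projective.π (kernel p)) (kernel.ι p) p).trans (by rw [kernel.condition, comp_zero]; rfl)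

noncomputable def resCx {P Z : C} (p : P ⟶ Z) : ChainComplex C ℕ :=
  ChainComplex.mk' P (Projective.syzygies p) (Projective.d p)
    (fun f => ⟨_, Projective.d f, syz_d_comp f⟩)

lemma resCx_d_1_0 {P Z : C} (p : P ⟶ Z) : (resCx p).d 1 0 = d p := by
  simp [resCx]

lemma exact_congr_defeq {X Y Z : C} {f f' : X ⟶ Y} {g g' : Y ⟶ Z} (hf : f = f') (hg : g = g')
    (w : f ≫ g = 0) (w' : f' ≫ g' = 0) (h : (ShortComplex.mk f g w).Exact) :
    (ShortComplex.mk f' g' w').Exact := by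
  subst hf hg; exact h

lemma resCx_d {P Z : C} (p : P ⟶ Z) (n : ℕ) :
    (resCx p).d (n + 1) n = ((ChainComplex.mkAux P (syzygies p) (syzygies (d p)) (d p) (d (d p))
      (syz_d_comp _) (fun S => ⟨syzygies S.f, ⟨d S.f, syz_d_comp _⟩⟩)) n).g :=
  ChainComplex.of_d (fun n => ((ChainComplex.mkAux P (syzygies p) (syzygies (d p)) (d p) (d (d p))
      (syz_d_comp _) (fun S => ⟨syzygies S.f, ⟨d S.f, syz_d_comp _⟩⟩)) n).X₃) 
      (fun n => ((ChainComplex.mkAux P (syzygies p) (syzygies (d p)) (d p) (d (d p))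
      (syz_d_comp _) (fun S => ⟨syzygies S.f, ⟨d S.f, syz_d_comp _⟩⟩)) n).g) n

lemma resCx_exact {P Z : C} (p : P ⟶ Z) (n : ℕ) : (resCx p).ExactAt (n + 1) := by
  rw [HomologicalComplex.exactAt_iff' _ (n + 1 + 1) (n + 1) n (by simp) (by simp)]
  match n with
  | 0 => exact exact_congr_defeq (f := d (d p)) (g := d p) (resCx_d p 1).symm
          (resCx_d p 0).symm (syz_d_comp _) ((resCx p).d_comp_d _ _ _) (exact_d_f (d p))
  | n + 1 =>
        exact exact_congr_defeq (resCx_d p (n+2)).symm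
          (resCx_d p (n+1)).symm (syz_d_comp _) ((resCx p).d_comp_d _ _ _) (exact_d_f _)

instance {P Z : C} (p : P ⟶ Z) [Projective P] (n : ℕ) : Projective ((resCx p).X n) := by
  obtain (_ | _ | _ | n) := n
  · assumption
  all_goals apply Projective.projective_over

noncomputable def resOf {P Z : C} (p : P ⟶ Z) [Projective P] [Epi p] : ProjectiveResolution Z where
  complex := resCx p
  π := (ChainComplex.toSingle₀Equiv _ _).symm ⟨p, by
          rw [resCx_d_1_0]; exact syz_d_comp p⟩
  quasiIso := ⟨fun n => by
    cases n
    · rw [ChainComplex.quasiIsoAt₀_iff, ShortComplex.quasiIso_iff_of_zeros']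
      · refine (ShortComplex.exact_and_epi_g_iff_of_iso ?_).2
          ⟨exact_d_f p, by dsimp; infer_instance⟩
        refine ShortComplex.isoMk (Iso.refl _) (Iso.refl _) (Iso.refl _) ?_ ?_
        · exact (Category.id_comp _).trans ((resCx_d_1_0 p).symm.trans (Category.comp_id _).symm)
        · refine (Category.id_comp _).trans (Eq.trans ?_ (Category.comp_id _).symm)
          exact (ChainComplex.toSingle₀Equiv_symm_apply_f_zero (C := resCx p) p _).symm
      all_goals rfl
    · rw [quasiIsoAt_iff_exactAt']
      · apply resCx_exact
      · apply ChainComplex.exactAt_succ_single_obj⟩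

variable {k : Type*} [Field k] [Linear k C]

lemma exact_data {P Z K : C} (p : P ⟶ Z) [Projective P] [Epi p] (i : K ⟶ P) [Mono i]
    (w : i ≫ p = 0) (ex : (ShortComplex.mk i p w).Exact) :
    ∃ (R : ProjectiveResolution Z) (u : R.complex.X 0 ≅ P) (e : R.complex.X 1 ⟶ K)
     (hz : R.complex.d 2 1 ≫ e = 0),
      e ≫ i = R.complex.d 1 0 ≫ u.hom ∧ Epi e ∧ (ShortComplex.mk _ e hz).Exact := by
  obtain ⟨l, hl⟩ : ∃ l : kernel p ⟶ K, l ≫ i = kernel.ι p :=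
    ⟨ex.lift (kernel.ι p) (kernel.condition p), ex.lift_f _ _⟩
  have hK : IsIso l := by
    refine ⟨kernel.lift p i w, ?_, ?_⟩
    · rw [← cancel_mono (kernel.ι p), assoc, kernel.lift_ι, hl, id_comp]
    · rw [← cancel_mono i, assoc, hl, kernel.lift_ι, id_comp]
  obtain ⟨e, he, h1⟩ : ∃ e : syzygies p ⟶ K, e ≫ i = d p ∧ Epi e := by
    refine ⟨Projective.π (kernel p) ≫ l, ?_, epi_comp (Projective.π (kernel p)) l⟩
    exact (assoc _ _ _).trans (congrArg (fun t => Projective.π (kernel p) ≫ t) hl)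
  have hz : d (d p) ≫ e = 0 := by
    rw [← cancel_mono i, assoc, he, zero_comp]; exact syz_d_comp _
  have h2 : (ShortComplex.mk _ e hz).Exact := by
    let β : ShortComplex.mk _ e hz ⟶ ShortComplex.mk (d (d p)) (d p) (syz_d_comp _) :=
      { τ₁ := 𝟙 _
        τ₂ := 𝟙 _
        τ₃ := i
        comm₁₂ := by simp
        comm₂₃ := by simp [he] }
    have : Epi β.τ₁ := inferInstanceAs (Epi (𝟙 _))
    have : IsIso β.τ₂ := inferInstanceAs (IsIso (𝟙 _))
    have : Mono β.τ₃ := inferInstanceAs (Mono i)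
    exact (ShortComplex.exact_iff_of_epi_of_isIso_of_mono β).2 (exact_d_f (d p))
  have h21 : d (d p) = (resCx p).d 2 1 := (resCx_d p 1).symm
  have hz' : (resCx p).d 2 1 ≫ e = 0 := by rw [← h21]; exact hz
  refine ⟨resOf p, Iso.refl _, e, hz', ?_, h1, ?_⟩
  · exact he.trans ((resCx_d_1_0 p).symm.trans (Category.comp_id _).symm)
  · exact exact_congr_defeq h21 rfl hz hz' h2

lemma ext_one_iso {P Z K : C} (p : P ⟶ Z) [Projective P] [Epi p] (i : K ⟶ P) [Mono i]
    (w : i ≫ p = 0) (ex : (ShortComplex.mk i p w).Exact) (N : C) :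
    Nonempty ((((Ext k C 1).obj (Opposite.op Z)).obj N) ≃ₗ[k]
      ((K ⟶ N) ⧸ LinearMap.range (Linear.leftComp k N i))) := by
  obtain ⟨R, u, e, hz, he, hepi, hex⟩ := exact_data p i w ex
  let S := (R.complex.linearYonedaObj k N).sc' 0 1 2
  have hf : ∀ x : R.complex.X 0 ⟶ N, S.f.hom x = R.complex.d 1 0 ≫ x := fun x => rfl
  have hg : ∀ x : R.complex.X 1 ⟶ N, S.g.hom x = R.complex.d 2 1 ≫ x := fun x => rfl
  let φ : (K ⟶ N) →ₗ[k] LinearMap.ker S.g.hom :=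
    LinearMap.codRestrict _ (Linear.leftComp k N e) (fun x => by
      refine (hg _).trans ?_
      change _ ≫ e ≫ x = 0
      rw [reassoc_of% hz, zero_comp])
  have hφ : Function.Bijective φ := by
    constructor
    · intro a b hab
      have : e ≫ a = e ≫ b := congrArg Subtype.val hab
      rwa [cancel_epi] at this
    · rintro ⟨x, hx⟩
      have hx' : R.complex.d 2 1 ≫ (x : R.complex.X 1 ⟶ N) = 0 := hx
      exact ⟨hex.desc x hx', Subtype.ext (hex.g_desc x hx')⟩
  let E := LinearEquiv.ofBijective φ hφ
  refine ⟨((R.isoExt 1 N) ≪≫ ShortComplex.homologyMapIso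
    ((R.complex.linearYonedaObj k N).isoSc' 0 1 2 (by simp) (by simp)) ≪≫
    S.moduleCatHomologyIso).toLinearEquiv ≪≫ₗ (Submodule.Quotient.equiv _ _ E ?_).symm⟩
  ext ⟨x, hx⟩
  constructor
  · rintro ⟨_, ⟨y, rfl⟩, hy⟩
    refine ⟨u.hom ≫ y, Subtype.ext ?_⟩
    have h3 : e ≫ i ≫ y = x := congrArg Subtype.val hy
    refine (hf _).trans (Eq.trans ?_ h3)
    rw [← assoc, ← he, assoc]
  · rintro ⟨(y : R.complex.X 0 ⟶ N), hy⟩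
    have h3 : R.complex.d 1 0 ≫ y = x := congrArg Subtype.val hy
    refine ⟨i ≫ u.inv ≫ y, ⟨u.inv ≫ y, rfl⟩, Subtype.ext ?_⟩
    change e ≫ i ≫ u.inv ≫ y = x
    rw [← assoc, he, assoc, u.hom_inv_id_assoc, h3]
end

section
open ModuleCat

variable {R : Type} [Ring R]

lemma ext_one_mod {k : Type} [Field k] [Algebra k R] {F M : ModuleCat.{0} R}
    (hF : Module.Projective R F)
    (p : F ⟶ M) (hp : Function.Surjective p.hom) (N : ModuleCat.{0} R) :
    Nonempty ((((Ext k (ModuleCat.{0} R) 1).obj (Opposite.op M)).obj N) ≃ₗ[k]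
      ((ModuleCat.of R (LinearMap.ker p.hom) ⟶ N) ⧸
        LinearMap.range (Linear.leftComp k N
          (ModuleCat.ofHom (LinearMap.ker p.hom).subtype)))) := by
  have : Projective F := IsProjective.iff_projective F |>.1 hF
  have : Epi p := (ModuleCat.epi_iff_surjective p).2 hp
  have : Mono (ModuleCat.ofHom (LinearMap.ker p.hom).subtype) :=
    (ModuleCat.mono_iff_injective _).2 (Submodule.subtype_injective _)
  have w : ModuleCat.ofHom (LinearMap.ker p.hom).subtype ≫ p = 0 := by
    ext x; exact x.2
  refine ext_one_iso p _ w ?_ N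
  rw [ShortComplex.moduleCat_exact_iff]
  intro x hx
  exact ⟨⟨x, hx⟩, rfl⟩

variable {S : Type} [Ring S] (φ : R →+* S)

/-- the identity map to the restriction -/
def toRes (M : ModuleCat.{0} S) (m : M) : (ModuleCat.restrictScalars φ).obj M := m

/-- the presentation over `R` -/
noncomputable def presR (M : ModuleCat.{0} S) :
    ModuleCat.of R (M →₀ R) ⟶ (ModuleCat.restrictScalars φ).obj M :=
  ModuleCat.ofHom (Y := (ModuleCat.restrictScalars φ).obj M)
    (Finsupp.linearCombination (M := (ModuleCat.restrictScalars φ).obj M) R (toRes φ M))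

noncomputable def presS (M : ModuleCat.{0} S) : ModuleCat.of S (M →₀ S) ⟶ M :=
  ModuleCat.ofHom (Finsupp.linearCombination S (fun m : M => m))

/-- reduction of coefficients -/
noncomputable def redF (M : ModuleCat.{0} S) : (M →₀ R) →ₛₗ[φ] (M →₀ S) where
  toFun := Finsupp.mapRange φ (map_zero φ)
  map_add' := Finsupp.mapRange_add (map_add φ)
  map_smul' c x := by ext; simp

lemma redF_surj (hφ : Function.Surjective φ) (M : ModuleCat.{0} S) :
    Function.Surjective (redF φ M) := Finsupp.mapRange_surjective φ (map_zero φ) hφ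

lemma redF_single (M : ModuleCat.{0} S) (m : M) (r : R) :
    redF φ M (Finsupp.single m r) = Finsupp.single m (φ r) := 
  Finsupp.mapRange_single (hf := map_zero φ)

lemma pres_redF (M : ModuleCat.{0} S) (x : M →₀ R) :
    (presS M).hom (redF φ M x) = ((presR φ M).hom x : M) := by
  induction x using Finsupp.induction_linear with
  | zero => exact (congrArg _ (map_zero _)).trans ((map_zero _).trans (map_zero (presR φ M).hom).symm)
  | add f g hf hg =>
    rw [map_add, map_add, hf, hg]; exact (map_add (presR φ M).hom f g).symm
  | single m r =>
    rw [redF_single]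
    refine (Finsupp.linearCombination_single S _ _).trans ?_
    exact (Finsupp.linearCombination_single (M := (ModuleCat.restrictScalars φ).obj M) (v := toRes φ M) R r m).symm

lemma pres_surjS (M : ModuleCat.{0} S) : Function.Surjective (presS M).hom := fun m =>
  ⟨Finsupp.single m 1, (Finsupp.linearCombination_single S _ _).trans (one_smul _ _)⟩

lemma pres_surjR (M : ModuleCat.{0} S) : Function.Surjective (presR φ M).hom := fun m =>
  ⟨Finsupp.single m 1, (Finsupp.linearCombination_single
    (M := (ModuleCat.restrictScalars φ).obj M) (v := toRes φ M) R _ _).trans (one_smul _ _)⟩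

/-- reduction on kernels -/
noncomputable def redK (M : ModuleCat.{0} S) :
    LinearMap.ker (presR φ M).hom →ₛₗ[φ] LinearMap.ker (presS M).hom where
  toFun x := ⟨redF φ M x.1, (pres_redF φ M x.1).trans x.2⟩
  map_add' x y := Subtype.ext (map_add (redF φ M) x.1 y.1)
  map_smul' c x := Subtype.ext ((redF φ M).map_smulₛₗ c x.1)

lemma redK_surj (hφ : Function.Surjective φ) (M : ModuleCat.{0} S) :
    Function.Surjective (redK φ M) := by
  rintro ⟨y, hy⟩
  obtain ⟨x, rfl⟩ := redF_surj φ hφ M y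
  exact ⟨⟨x, (pres_redF φ M x).symm.trans hy⟩, rfl⟩

/-- pull back a map of kernels along the reduction -/
noncomputable def pullK {M N : ModuleCat.{0} S}
    (f : ModuleCat.of S (LinearMap.ker (presS M).hom) ⟶ N) :
    ModuleCat.of R (LinearMap.ker (presR φ M).hom) ⟶ (ModuleCat.restrictScalars φ).obj N :=
  ModuleCat.ofHom (Y := (ModuleCat.restrictScalars φ).obj N)
    { toFun := fun x => f.hom (redK φ M x)
      map_add' := fun x y => by rw [map_add, map_add]; rfl
      map_smul' := fun c x => by rw [LinearMap.map_smulₛₗ, map_smul]; rfl }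

lemma kill (hφ : Function.Surjective φ) (hid : ∀ a : R, φ a = 0 →
      a ∈ AddSubgroup.closure {y | ∃ b c : R, φ b = 0 ∧ φ c = 0 ∧ y = b * c})
    {M N : ModuleCat.{0} S}
    (g : ModuleCat.of R (LinearMap.ker (presR φ M).hom) ⟶ (ModuleCat.restrictScalars φ).obj N)
    (x : LinearMap.ker (presR φ M).hom) (hx : redK φ M x = 0) : g.hom x = 0 := by
  have mem : ∀ y : M →₀ R, redF φ M y = 0 → y ∈ LinearMap.ker (presR φ M).hom := fun y hy =>
    (pres_redF φ M y).symm.trans ((congrArg _ hy).trans (map_zero _))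
  have key : ∀ (m : M) (a : R), φ a = 0 → ∃ h, g.hom ⟨Finsupp.single m a, h⟩ = 0 := by
    intro m a ha
    refine AddSubgroup.closure_induction
      (p := fun a _ => ∃ h, g.hom ⟨Finsupp.single m a, h⟩ = 0) ?_ ?_ ?_ ?_ (hid a ha)
    · rintro _ ⟨b, c, hb, hc, rfl⟩
      have hc' := mem (Finsupp.single m c) (by rw [redF_single, hc, Finsupp.single_zero])
      have e : Finsupp.single m (b * c) = b • Finsupp.single m c := by simp
      refine ⟨e ▸ Submodule.smul_mem _ b hc', ?_⟩
      have : (⟨Finsupp.single m (b * c), e ▸ Submodule.smul_mem _ b hc'⟩ :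
        LinearMap.ker (presR φ M).hom) = b • ⟨Finsupp.single m c, hc'⟩ := Subtype.ext e
      rw [this]
      refine (map_smul g.hom b _).trans ?_
      refine (ModuleCat.restrictScalars.smul_def φ b _).trans ?_
      rw [hb]
      exact zero_smul S (A := N) _
    · refine ⟨by simp, ?_⟩
      exact (congrArg g.hom (Subtype.ext (by simp))).trans (map_zero g.hom)
    · rintro a b _ _ ⟨h1, e1⟩ ⟨h2, e2⟩
      refine ⟨by rw [Finsupp.single_add]; exact Submodule.add_mem _ h1 h2, ?_⟩
      refine Eq.trans (congrArg g.hom (Subtype.ext (Finsupp.single_add m a b) :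
        _ = (⟨_, h1⟩ + ⟨_, h2⟩ : LinearMap.ker (presR φ M).hom))) ?_
      refine (map_add g.hom _ _).trans ?_
      rw [e1, e2, add_zero]
    · rintro a _ ⟨h1, e1⟩
      refine ⟨by rw [Finsupp.single_neg]; exact Submodule.neg_mem _ h1, ?_⟩
      refine Eq.trans (congrArg g.hom (Subtype.ext (Finsupp.single_neg m a) :
        _ = (-⟨_, h1⟩ : LinearMap.ker (presR φ M).hom))) ?_
      refine (map_neg g.hom _).trans ?_
      rw [e1, neg_zero]
  have all : ∀ y : M →₀ R, redF φ M y = 0 → ∃ h, g.hom ⟨y, h⟩ = 0 := by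
    intro y
    induction y using Finsupp.induction with
    | zero =>
      intro _
      exact ⟨Submodule.zero_mem _, map_zero g.hom⟩
    | single_add m r f hm hr ih =>
      intro h0
      have hpt : ∀ n, φ ((Finsupp.single m r + f) n) = 0 := fun n => DFunLike.congr_fun h0 n
      have hr0 : φ r = 0 := by
        have := hpt m
        rw [Finsupp.add_apply, Finsupp.notMem_support_iff.1 hm] at this
        simpa using this
      have hf0 : redF φ M f = 0 := by
        rw [map_add, redF_single, hr0] at h0
        simpa using h0
      obtain ⟨h1, e1⟩ := key m r hr0
      obtain ⟨h2, e2⟩ := ih hf0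
      refine ⟨Submodule.add_mem _ h1 h2, ?_⟩
      refine (map_add g.hom ⟨_, h1⟩ ⟨_, h2⟩).trans ?_
      rw [e1, e2, add_zero]
  obtain ⟨_, h⟩ := all x.1 (congrArg Subtype.val hx)
  exact h

lemma main_iso {k : Type} [Field k] [Algebra k R] [Algebra k S]
    (hk : ∀ c : k, φ (algebraMap k R c) = algebraMap k S c)
    (hφ : Function.Surjective φ) (hid : ∀ a : R, φ a = 0 →
      a ∈ AddSubgroup.closure {y | ∃ b c : R, φ b = 0 ∧ φ c = 0 ∧ y = b * c})
    (M N : ModuleCat.{0} S) :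
    Nonempty ((((Ext k (ModuleCat.{0} R) 1).obj
        (Opposite.op ((ModuleCat.restrictScalars φ).obj M))).obj
          ((ModuleCat.restrictScalars φ).obj N)) ≅
        (((Ext k (ModuleCat.{0} S) 1).obj (Opposite.op M)).obj N)) := by
  obtain ⟨e1⟩ := ext_one_mod (k := k) (F := ModuleCat.of R (M →₀ R))
    (inferInstanceAs (Module.Projective R (M →₀ R))) (presR φ M)
    (pres_surjR φ M) ((ModuleCat.restrictScalars φ).obj N)
  obtain ⟨e2⟩ := ext_one_mod (k := k) (F := ModuleCat.of S (M →₀ S))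
    (inferInstanceAs (Module.Projective S (M →₀ S))) (presS M) (pres_surjS M) N
  let L : (ModuleCat.of S (LinearMap.ker (presS M).hom) ⟶ N) →ₗ[k]
      (ModuleCat.of R (LinearMap.ker (presR φ M).hom) ⟶ (ModuleCat.restrictScalars φ).obj N) :=
    { toFun := pullK φ
      map_add' := fun f g => rfl
      map_smul' := fun c f => by
        ext x
        change algebraMap k S c • f.hom (redK φ M x) =
          φ (algebraMap k R c) • f.hom (redK φ M x)
        rw [hk] }
  have hL : Function.Bijective L := by
    constructor
    · intro f g h
      ext y
      obtain ⟨x, rfl⟩ := redK_surj φ hφ M y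
      exact congrArg (fun t => t.hom x) h
    · intro g
      have hker : ∀ x y, redK φ M x = redK φ M y → g.hom x = g.hom y := by
        intro x y hxy
        have := kill φ hφ hid g (x - y) (by rw [map_sub, hxy, sub_self])
        exact sub_eq_zero.1 ((map_sub g.hom x y).symm.trans this)
      let s := Function.surjInv (redK_surj φ hφ M)
      have hs : ∀ y, redK φ M (s y) = y := Function.surjInv_eq _
      refine ⟨ModuleCat.ofHom
        { toFun := fun y => (g.hom (s y) : N)
          map_add' := fun y z => ?_
          map_smul' := fun c y => ?_ }, ?_⟩
      · refine Eq.trans ?_ (map_add g.hom (s y) (s z))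
        apply hker
        rw [map_add, hs, hs, hs]
      · obtain ⟨r, rfl⟩ := hφ c
        refine Eq.trans ?_ (map_smul g.hom r (s y))
        apply hker
        rw [LinearMap.map_smulₛₗ, hs, hs]
      · ext x
        exact hker _ _ (hs _)
  let E := LinearEquiv.ofBijective L hL
  refine ⟨(e1 ≪≫ₗ (Submodule.Quotient.equiv _ _ E ?_).symm ≪≫ₗ e2.symm).toModuleIso⟩
  apply le_antisymm
  · rintro _ ⟨_, ⟨(y : ModuleCat.of S (M →₀ S) ⟶ N), rfl⟩, rfl⟩
    refine ⟨ModuleCat.ofHom (Y := (ModuleCat.restrictScalars φ).obj N)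
      { toFun := fun x => y.hom (redF φ M x)
        map_add' := fun x z => by rw [map_add, map_add]; rfl
        map_smul' := fun c x => by rw [LinearMap.map_smulₛₗ, map_smul]; rfl }, ?_⟩
    rfl
  · rintro _ ⟨(y : ModuleCat.of R (M →₀ R) ⟶ (ModuleCat.restrictScalars φ).obj N), rfl⟩
    let y' : ModuleCat.of S (M →₀ S) ⟶ N := ModuleCat.ofHom
      (Finsupp.linearCombination S (fun m : M => (y.hom (Finsupp.single m 1) : N)))
    refine ⟨_, ⟨y', rfl⟩, ?_⟩
    have hy : ∀ x : M →₀ R, y'.hom (redF φ M x) = (y.hom x : N) := by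
      intro x
      induction x using Finsupp.induction_linear with
      | zero => exact (congrArg _ (map_zero _)).trans ((map_zero _).trans (map_zero y.hom).symm)
      | add f g hf hg =>
        rw [map_add, map_add, hf, hg]; exact (map_add y.hom f g).symm
      | single m r =>
        rw [redF_single]
        refine (Finsupp.linearCombination_single S _ _).trans ?_
        refine Eq.trans ?_ (congrArg y.hom
          (show r • Finsupp.single m (1 : R) = Finsupp.single m r by simp))
        exact (map_smul y.hom r _).symm
    ext x
    exact hy x.1
end

theorem stmt3 (k : Type) [Field k] (A B : Type) [Ring A] [Ring B]
    [Algebra k A] [Algebra k B]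
    (π : A →ₐ[k] B) (hsurj : Function.Surjective π)
    (hidem : Submodule.span k {y : A | ∃ a ∈ RingHom.ker π, ∃ b ∈ RingHom.ker π, y = a * b}
      = Submodule.restrictScalars k (RingHom.ker π))
    (M N : ModuleCat Bᵐᵒᵖ) (hM : Module.Finite Bᵐᵒᵖ M) :
    Nonempty
      ((((Ext k (ModuleCat Aᵐᵒᵖ) 1).obj
            (Opposite.op ((ModuleCat.restrictScalars (RingHom.op π.toRingHom)).obj M))).obj
          ((ModuleCat.restrictScalars (RingHom.op π.toRingHom)).obj N)) ≅
        (((Ext k (ModuleCat Bᵐᵒᵖ) 1).obj (Opposite.op M)).obj N)) := by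
  have hop : ∀ a : Aᵐᵒᵖ, RingHom.op π.toRingHom a = MulOpposite.op (π a.unop) := fun a => rfl
  refine main_iso (RingHom.op π.toRingHom) ?_ ?_ ?_ M N
  · intro c
    rw [hop, MulOpposite.algebraMap_apply, MulOpposite.algebraMap_apply, MulOpposite.unop_op,
      AlgHom.commutes]
  · intro b
    obtain ⟨a, ha⟩ := hsurj b.unop
    exact ⟨MulOpposite.op a, by rw [hop, MulOpposite.unop_op, ha, MulOpposite.op_unop]⟩
  · intro a ha
    have ha' : π a.unop = 0 := by
      rw [hop] at ha; exact (MulOpposite.op_eq_zero_iff _).1 ha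
    have hm : a.unop ∈ Submodule.span k
        {y : A | ∃ a ∈ RingHom.ker π, ∃ b ∈ RingHom.ker π, y = a * b} := by
      rw [hidem]; exact ha'
    have : ∀ x ∈ Submodule.span k
        {y : A | ∃ a ∈ RingHom.ker π, ∃ b ∈ RingHom.ker π, y = a * b}, ∀ c : k,
        MulOpposite.op (c • x) ∈ AddSubgroup.closure {y | ∃ b c : Aᵐᵒᵖ,
          RingHom.op π.toRingHom b = 0 ∧ RingHom.op π.toRingHom c = 0 ∧ y = b * c} := by
      intro x hx
      induction hx using Submodule.span_induction with
      | mem x hx =>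
        obtain ⟨a, ha, b, hb, rfl⟩ := hx
        intro c
        rw [RingHom.mem_ker] at ha hb
        refine AddSubgroup.subset_closure ⟨MulOpposite.op b, MulOpposite.op (c • a), ?_, ?_, ?_⟩
        · rw [hop, MulOpposite.unop_op, hb, MulOpposite.op_zero]
        · rw [hop, MulOpposite.unop_op, map_smul, ha, smul_zero, MulOpposite.op_zero]
        · rw [← MulOpposite.op_mul, smul_mul_assoc]
      | zero => intro c; rw [smul_zero, MulOpposite.op_zero]; exact AddSubgroup.zero_mem _
      | add x y _ _ hx hy =>
        intro c
        rw [smul_add, MulOpposite.op_add]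
        exact AddSubgroup.add_mem _ (hx c) (hy c)
      | smul d x _ hx => intro c; rw [smul_smul]; exact hx _
    simpa using this _ hm 1
end

section
/- Let k be a field, A an associative unital k-algebra, and I a two-sided ideal of A with I·I = I that is projective as a right A-module. Then for all right A/I-modules M and N with M finitely generated, and for every n ≥ 0, there is an isomorphism Ext^n_A(M, N) ≅ Ext^n_{A/I}(M, N). -/
open CategoryTheory

namespace HEpi
section mods
variable {R : Type} [Ring R] (J : Ideal R)

lemma map_smul_top {P Q : Type} [AddCommGroup P] [Module R P] [AddCommGroup Q] [Module R Q]
    (g : P →ₗ[R] Q) {x : P} (hx : x ∈ J • (⊤ : Submodule R P)) :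
    g x ∈ J • (⊤ : Submodule R Q) := by
  have : g x ∈ (J • (⊤ : Submodule R P)).map g := ⟨x, hx, rfl⟩
  rw [Submodule.map_smul''] at this
  exact Submodule.smul_mono le_rfl le_top this

lemma proj_free [J.IsTwoSided] (hJ : Module.Projective R J) (X : Type) :
    Module.Projective R (J • (⊤ : Submodule R (X →₀ R)) : Submodule R (X →₀ R)) := by
  classical
  have : Module.Projective R (X →₀ J) :=
    Module.Projective.of_equiv (finsuppLequivDFinsupp R (ι := X) (M := J)).symm
  have hmem : ∀ y : X →₀ J, Finsupp.mapRange.linearMap (J.subtype) y ∈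
      J • (⊤ : Submodule R (X →₀ R)) := by
    intro y
    induction y using Finsupp.induction_linear with
    | zero => simp
    | add f g hf hg => rw [map_add]; exact add_mem hf hg
    | single a b =>
      have : Finsupp.mapRange.linearMap (J.subtype) (Finsupp.single a b) =
        (b : R) • Finsupp.single a (1 : R) := by simp
      rw [this]
      exact Submodule.smul_mem_smul b.2 trivial
  have hco : ∀ (f : X →₀ R), f ∈ J • (⊤ : Submodule R (X →₀ R)) → ∀ x, f x ∈ J := by
    intro f hf x
    have h := map_smul_top J (Finsupp.lapply x : (X →₀ R) →ₗ[R] R) hf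
    have h2 : J • (⊤ : Submodule R R) ≤ J := by
      rw [Submodule.smul_le]
      intro r hr n _
      exact J.mul_mem_right n hr
    exact h2 h
  have hinj : Function.Injective (Finsupp.mapRange.linearMap (α := X) J.subtype) :=
    by
    intro a b hab
    ext x
    exact DFunLike.congr_fun hab x
  have hr : ∀ f : (J • (⊤ : Submodule R (X →₀ R)) : Submodule R (X →₀ R)),
      ∃ y : X →₀ J, Finsupp.mapRange.linearMap (J.subtype) y = f.1 := by
    intro f
    refine ⟨Finsupp.onFinset f.1.support (fun x => ⟨f.1 x, hco _ f.2 x⟩) ?_, ?_⟩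
    · intro a ha
      simpa [Subtype.ext_iff] using ha
    · ext x; simp
  refine Module.Projective.of_equiv (LinearEquiv.ofBijective
    ((Finsupp.mapRange.linearMap (α := X) J.subtype).codRestrict _ hmem) ⟨?_, ?_⟩)
  · intro a b hab
    exact hinj (congrArg Subtype.val hab)
  · intro f
    obtain ⟨y, hy⟩ := hr f
    exact ⟨y, Subtype.ext hy⟩

lemma proj_smul [J.IsTwoSided] (hJ : Module.Projective R J) (P : Type) [AddCommGroup P]
    [Module R P] (hP : Module.Projective R P) :
    Module.Projective R (J • (⊤ : Submodule R P) : Submodule R P) := by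
  obtain ⟨s, hs⟩ := hP.out
  have := proj_free J hJ P
  refine Module.Projective.of_split
    (s.restrict (p := J • ⊤) (q := J • ⊤) (fun x hx => map_smul_top J s hx))
    ((Finsupp.linearCombination R (id : P → P)).restrict (p := J • ⊤) (q := J • ⊤)
      (fun x hx => map_smul_top J _ hx)) ?_
  ext x
  exact hs x.1

lemma step [J.IsTwoSided] (hJ : Module.Projective R J) (hJJ : J * J = J)
    {P Q : Type} [AddCommGroup P] [Module R P] [AddCommGroup Q] [Module R Q]
    (hP : Module.Projective R P) (g : P →ₗ[R] Q)
    (hW : Module.Projective R (J • LinearMap.range g : Submodule R Q)) :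
    J • LinearMap.ker g = LinearMap.ker g ⊓ J • ⊤ ∧
      Module.Projective R (J • LinearMap.ker g : Submodule R P) := by
  have hPJ := proj_smul J hJ P hP
  have himg : (J • (⊤ : Submodule R P)).map g = J • LinearMap.range g := by
    rw [Submodule.map_smul'', LinearMap.range_eq_map]
  let g' : (J • (⊤ : Submodule R P) : Submodule R P) →ₗ[R] (J • LinearMap.range g : Submodule R Q) :=
    g.restrict (fun x hx => himg ▸ ⟨x, hx, rfl⟩)
  have hg' : Function.Surjective g' := by
    rintro ⟨y, hy⟩
    rw [← himg] at hy
    obtain ⟨x, hx, rfl⟩ := hy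
    exact ⟨⟨x, hx⟩, rfl⟩
  obtain ⟨s, hs⟩ := Module.projective_lifting_property g' LinearMap.id hg'
  have hs' : ∀ y, g' (s y) = y := fun y => LinearMap.congr_fun hs y
  -- projection onto the kernel
  let p : (J • (⊤ : Submodule R P) : Submodule R P) →ₗ[R]
      (LinearMap.ker g ⊓ J • ⊤ : Submodule R P) :=
    ((J • (⊤ : Submodule R P)).subtype ∘ₗ (LinearMap.id - s ∘ₗ g')).codRestrict _ (by
      intro x
      refine ⟨?_, (x - s (g' x)).2⟩
      have : g' (x - s (g' x)) = 0 := by rw [map_sub, hs', sub_self]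
      exact congrArg Subtype.val this)
  have hp : ∀ (x : P) (h1 : x ∈ LinearMap.ker g) (h2 : x ∈ J • (⊤ : Submodule R P)),
      p ⟨x, h2⟩ = ⟨x, h1, h2⟩ := by
    intro x h1 h2
    have : g' ⟨x, h2⟩ = 0 := Subtype.ext h1
    apply Subtype.ext
    change x - (s (g' ⟨x, h2⟩)).1 = x
    rw [this]; simp
  have heq : J • LinearMap.ker g = LinearMap.ker g ⊓ J • ⊤ := by
    apply le_antisymm
    · exact le_inf Submodule.smul_le_right (Submodule.smul_mono le_rfl le_top)
    · intro x hx
      have h3 : (⟨x, hx.2⟩ : (J • (⊤ : Submodule R P) : Submodule R P)) ∈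
          J • (⊤ : Submodule R (J • (⊤ : Submodule R P) : Submodule R P)) := by
        have : x ∈ (J • (⊤ : Submodule R (J • (⊤ : Submodule R P) : Submodule R P))).map
            (J • (⊤ : Submodule R P)).subtype := by
          rw [Submodule.map_smul'', Submodule.map_top, Submodule.range_subtype,
            ← Submodule.mul_smul, hJJ]
          exact hx.2
        obtain ⟨y, hy, rfl⟩ := this
        exact hy
      have h4 := map_smul_top J ((LinearMap.ker g ⊓ J • ⊤ : Submodule R P).subtype ∘ₗ p)
        h3
      have h5 : x ∈ (J • (⊤ : Submodule R (LinearMap.ker g ⊓ J • ⊤ : Submodule R P))).map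
          (LinearMap.ker g ⊓ J • ⊤ : Submodule R P).subtype := by
        refine ⟨p ⟨x, hx.2⟩, map_smul_top J p h3, ?_⟩
        rw [hp x hx.1 hx.2]; rfl
      rw [Submodule.map_smul'', Submodule.map_top, Submodule.range_subtype] at h5
      exact Submodule.smul_mono le_rfl inf_le_left h5
  refine ⟨heq, ?_⟩
  rw [heq]
  refine Module.Projective.of_split (Submodule.inclusion inf_le_right) p ?_
  ext x
  exact congrArg Subtype.val (hp x.1 x.2.1 x.2.2)
end mods
section fun_part
variable {R S : Type} [Ring R] [Ring S] (f : R →+* S)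

/-- The quotient `P / JP` where `J = ker f`. -/
def Qt (P : Type) [AddCommGroup P] [Module R P] : Type :=
  P ⧸ (RingHom.ker f • (⊤ : Submodule R P))

variable (P : Type) [AddCommGroup P] [Module R P]
instance : AddCommGroup (Qt f P) :=
  inferInstanceAs (AddCommGroup (P ⧸ (RingHom.ker f • (⊤ : Submodule R P))))
instance : Module R (Qt f P) :=
  inferInstanceAs (Module R (P ⧸ (RingHom.ker f • (⊤ : Submodule R P))))

/-- The projection. -/
def Qt.mk : P →ₗ[R] Qt f P := (RingHom.ker f • (⊤ : Submodule R P)).mkQ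

lemma Qt.mk_surj : Function.Surjective (Qt.mk f P) := Submodule.mkQ_surjective _

variable {P} in
lemma Qt.mk_eq_zero {x : P} : Qt.mk f P x = 0 ↔ x ∈ RingHom.ker f • (⊤ : Submodule R P) :=
  Submodule.Quotient.mk_eq_zero _

variable [hf : Fact (Function.Surjective f)]

noncomputable instance : SMul S (Qt f P) := ⟨fun s x => (Function.surjInv hf.out s) • x⟩

lemma Qt.smul_eq (r : R) (x : Qt f P) : f r • x = r • x := by
  obtain ⟨y, rfl⟩ := Qt.mk_surj f P x
  change (Function.surjInv hf.out (f r)) • Qt.mk f P y = _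
  rw [← sub_eq_zero, ← sub_smul, ← map_smul, Qt.mk_eq_zero]
  refine Submodule.smul_mem_smul ?_ trivial
  rw [RingHom.mem_ker, map_sub, Function.surjInv_eq hf.out, sub_self]

noncomputable instance : Module S (Qt f P) :=
  Function.Surjective.moduleLeft f hf.out (Qt.smul_eq f P)

variable {P}
/-- Universal property. -/
noncomputable def Qt.lift {N : Type} [AddCommGroup N] [Module S N] (g : P →+ N)
    (hg : ∀ (r : R) x, g (r • x) = f r • g x) : Qt f P →ₗ[S] N where
  toFun := QuotientAddGroup.lift (RingHom.ker f • (⊤ : Submodule R P)).toAddSubgroup g (by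
    intro x hx
    change x ∈ RingHom.ker f • (⊤ : Submodule R P) at hx
    change g x = 0
    induction hx using Submodule.smul_induction_on' with
    | smul r hr n _ => rw [hg, RingHom.mem_ker.1 hr, zero_smul]
    | add x _ y _ h1 h2 => rw [map_add, h1, h2, add_zero])
  map_add' := map_add _
  map_smul' := by
    intro s x
    obtain ⟨r, rfl⟩ := hf.out s
    obtain ⟨y, rfl⟩ := Qt.mk_surj f P x
    rw [Qt.smul_eq, ← map_smul]
    exact hg r y

lemma Qt.lift_mk {N : Type} [AddCommGroup N] [Module S N] (g : P →+ N)
    (hg : ∀ (r : R) x, g (r • x) = f r • g x) (x : P) :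
    Qt.lift f g hg (Qt.mk f P x) = g x := rfl

lemma Qt.hom_ext {N : Type} [AddCommGroup N] [Module S N] {g h : Qt f P →ₗ[S] N}
    (hh : ∀ x, g (Qt.mk f P x) = h (Qt.mk f P x)) : g = h := by
  ext x
  obtain ⟨y, rfl⟩ := Qt.mk_surj f P x
  exact hh y

/-- Functoriality. -/
noncomputable def Qt.map {P' : Type} [AddCommGroup P'] [Module R P'] (g : P →ₗ[R] P') :
    Qt f P →ₗ[S] Qt f P' :=
  Qt.lift f ((Qt.mk f P').comp g).toAddMonoidHom (by
    intro r x
    simp [Qt.smul_eq])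

lemma Qt.map_mk {P' : Type} [AddCommGroup P'] [Module R P'] (g : P →ₗ[R] P') (x : P) :
    Qt.map f g (Qt.mk f P x) = Qt.mk f P' (g x) := rfl

/-- The base change functor. -/
noncomputable def F : ModuleCat.{0} R ⥤ ModuleCat.{0} S where
  obj P := ModuleCat.of S (Qt f P)
  map g := ModuleCat.ofHom (Qt.map f g.hom)
  map_id P := ModuleCat.hom_ext (Qt.hom_ext f fun x => rfl)
  map_comp g h := ModuleCat.hom_ext (Qt.hom_ext f fun x => rfl)

/-- Hom equivalence. -/
noncomputable def homEq (P : ModuleCat.{0} R) (N : ModuleCat.{0} S) :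
    ((F f).obj P ⟶ N) ≃+ (P ⟶ (ModuleCat.restrictScalars f).obj N) where
  toFun φ := ModuleCat.ofHom (Y := (ModuleCat.restrictScalars f).obj N)
    { toFun := fun x => (φ.hom (Qt.mk f P x) : N)
      map_add' := fun x y => by rw [map_add]; exact map_add φ.hom _ _
      map_smul' := fun r x => by
        rw [map_smul, ← Qt.smul_eq]
        exact map_smul φ.hom (f r) (Qt.mk f P x) }
  invFun ψ := ModuleCat.ofHom (Qt.lift f (N := N) ψ.hom.toAddMonoidHom
    (fun r x => map_smul ψ.hom r x))
  left_inv φ := ModuleCat.hom_ext (Qt.hom_ext f fun x => rfl)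
  right_inv ψ := rfl
  map_add' φ ψ := rfl

lemma homEq_apply (P : ModuleCat.{0} R) (N : ModuleCat.{0} S) (φ : (F f).obj P ⟶ N) (x : P) :
    ((homEq f P N φ).hom x : N) = φ.hom (Qt.mk f P x) := rfl

/-- The adjunction. -/
noncomputable def adj : F f ⊣ ModuleCat.restrictScalars.{0} f :=
  Adjunction.mkOfHomEquiv
    { homEquiv := fun P N => (homEq f P N).toEquiv
      homEquiv_naturality_left_symm := fun g h =>
        ModuleCat.hom_ext (Qt.hom_ext f fun x => rfl)
      homEquiv_naturality_right := fun g h => rfl }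

instance : (F f).Additive := (adj f).left_adjoint_additive

instance (P : ModuleCat.{0} R) [Projective P] : Projective ((F f).obj P) :=
  (adj f).map_projective P inferInstance

end fun_part
section res
variable {R S : Type} [Ring R] [Ring S] (f : R →+* S) [hf : Fact (Function.Surjective f)]
  (M : ModuleCat.{0} S) (P : ProjectiveResolution ((ModuleCat.restrictScalars.{0} f).obj M))

/-- augmentation -/
noncomputable def ε : P.complex.X 0 ⟶ (ModuleCat.restrictScalars.{0} f).obj M := P.π.f 0

lemma d_ε : P.complex.d 1 0 ≫ ε f M P = 0 := P.complex_d_comp_π_f_zero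

instance : Epi (ε f M P) := inferInstanceAs (Epi (P.π.f 0))

lemma ε_surj : Function.Surjective (ε f M P).hom := (ModuleCat.epi_iff_surjective _).1 inferInstance

lemma exact0 : (ShortComplex.mk _ _ (d_ε f M P)).Exact := P.exact₀

lemma range0 : LinearMap.range (P.complex.d 1 0).hom = LinearMap.ker (ε f M P).hom :=
  (exact0 f M P).moduleCat_range_eq_ker

lemma rangeS (n : ℕ) : LinearMap.range (P.complex.d (n+2) (n+1)).hom =
    LinearMap.ker (P.complex.d (n+1) n).hom :=
  (P.exact_succ n).moduleCat_range_eq_ker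

lemma proj_mod (n : ℕ) : Module.Projective R (P.complex.X n) :=
  (IsProjective.iff_projective _).2 (P.projective n)

variable (hJ : Module.Projective R (RingHom.ker f)) (hJJ : RingHom.ker f * RingHom.ker f = RingHom.ker f)

include hJ hJJ
lemma claim0 : RingHom.ker f • LinearMap.ker (ε f M P).hom =
      LinearMap.ker (ε f M P).hom ⊓ RingHom.ker f • ⊤ ∧
    Module.Projective R (RingHom.ker f • LinearMap.ker (ε f M P).hom : Submodule R _) := by
  refine step _ hJ hJJ (proj_mod f M P 0) _ ?_
  have : RingHom.ker f • LinearMap.range (ε f M P).hom = ⊥ := by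
    rw [eq_bot_iff, Submodule.smul_le]
    intro r hr n _
    have h : f r = 0 := hr
    change r • n = 0
    rw [ModuleCat.restrictScalars.smul_def, h]
    exact zero_smul S (n : M)
  rw [this]
  infer_instance

lemma claimS (n : ℕ) : RingHom.ker f • LinearMap.ker (P.complex.d (n+1) n).hom =
      LinearMap.ker (P.complex.d (n+1) n).hom ⊓ RingHom.ker f • ⊤ ∧
    Module.Projective R (RingHom.ker f • LinearMap.ker (P.complex.d (n+1) n).hom : Submodule R _) := by
  induction n with
  | zero =>
    refine step _ hJ hJJ (proj_mod f M P _) _ ?_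
    rw [range0]
    exact (claim0 f M P hJ hJJ).2
  | succ n ih =>
    refine step _ hJ hJJ (proj_mod f M P _) _ ?_
    rw [rangeS]
    exact ih.2

omit hJ hJJ
lemma lift_aux {P0 P1 P2 : Type} [AddCommGroup P0] [Module R P0] [AddCommGroup P1] [Module R P1]
    [AddCommGroup P2] [Module R P2] {Z : Type} [AddCommGroup Z] [Module R Z]
    (d2 : P2 →ₗ[R] P1) (d1 : P1 →ₗ[R] P0) (e : P0 →ₗ[R] Z)
    (h21 : LinearMap.range d2 = LinearMap.ker d1) (h10 : LinearMap.range d1 = LinearMap.ker e)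
    (hc : RingHom.ker f • LinearMap.ker e = LinearMap.ker e ⊓ RingHom.ker f • ⊤)
    (x : Qt f P1) (hx : Qt.map f d1 x = 0) : ∃ y, Qt.map f d2 y = x := by
  obtain ⟨x, rfl⟩ := Qt.mk_surj f P1 x
  rw [Qt.map_mk, Qt.mk_eq_zero] at hx
  have h1 : d1 x ∈ LinearMap.ker e := h10 ▸ ⟨x, rfl⟩
  have h2 : d1 x ∈ RingHom.ker f • LinearMap.ker e := hc ▸ ⟨h1, hx⟩
  rw [← h10, LinearMap.range_eq_map, ← Submodule.map_smul''] at h2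
  obtain ⟨z, hz, hzx⟩ := h2
  have h3 : x - z ∈ LinearMap.range d2 := by
    rw [h21, LinearMap.mem_ker, map_sub, hzx, sub_self]
  obtain ⟨y, hy⟩ := h3
  refine ⟨Qt.mk f P2 y, ?_⟩
  rw [Qt.map_mk, hy, map_sub, (Qt.mk_eq_zero f).2 hz, sub_zero]

include hJ hJJ
lemma exactS (n : ℕ) : (ShortComplex.mk ((F f).map (P.complex.d (n+2) (n+1)))
    ((F f).map (P.complex.d (n+1) n)) (by rw [← Functor.map_comp]; simp)).Exact := by
  rw [ShortComplex.moduleCat_exact_iff]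
  intro x hx
  cases n with
  | zero => exact lift_aux f _ _ _ (rangeS f M P 0) (range0 f M P) (claim0 f M P hJ hJJ).1 x hx
  | succ n =>
    exact lift_aux f _ _ _ (rangeS f M P (n+1)) (rangeS f M P n) (claimS f M P hJ hJJ n).1 x hx

omit hJ hJJ
/-- augmentation -/
noncomputable def ε' : (F f).obj (P.complex.X 0) ⟶ M := (homEq f _ _).symm (ε f M P)

lemma d_ε' : (F f).map (P.complex.d 1 0) ≫ ε' f M P = 0 := by
  refine ModuleCat.hom_ext (Qt.hom_ext f fun x => ?_)
  exact ConcreteCategory.congr_hom (d_ε f M P) x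

instance : Epi (ε' f M P) := by
  rw [ModuleCat.epi_iff_surjective]
  intro m
  obtain ⟨x, hx⟩ := ε_surj f M P m
  exact ⟨Qt.mk f _ x, hx⟩

lemma exact0' : (ShortComplex.mk _ _ (d_ε' f M P)).Exact := by
  rw [ShortComplex.moduleCat_exact_iff]
  intro x hx
  obtain ⟨x, rfl⟩ := Qt.mk_surj f _ x
  have : x ∈ LinearMap.ker (ε f M P).hom := hx
  rw [← range0] at this
  obtain ⟨y, rfl⟩ := this
  exact ⟨Qt.mk f _ y, rfl⟩

/-- The induced resolution. -/
noncomputable def newRes (hJ : Module.Projective R (RingHom.ker f))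
    (hJJ : RingHom.ker f * RingHom.ker f = RingHom.ker f) : ProjectiveResolution M where
  complex := ((F f).mapHomologicalComplex _).obj P.complex
  projective n := inferInstanceAs (Projective ((F f).obj (P.complex.X n)))
  π := (ChainComplex.toSingle₀Equiv _ _).symm ⟨ε' f M P, d_ε' f M P⟩
  quasiIso := ⟨fun n => by
    cases n
    · rw [ChainComplex.quasiIsoAt₀_iff, ShortComplex.quasiIso_iff_of_zeros']
      · refine (ShortComplex.exact_and_epi_g_iff_of_iso ?_).2
          ⟨exact0' f M P, inferInstanceAs (Epi (ε' f M P))⟩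
        exact ShortComplex.isoMk (Iso.refl _) (Iso.refl _) (Iso.refl _)
          (by cat_disch) (by simp; rfl)
      · exact HomologicalComplex.shape (((F f).mapHomologicalComplex _).obj P.complex) 0 0 (by simp)
      all_goals rfl
    · rw [quasiIsoAt_iff_exactAt']
      · rw [HomologicalComplex.exactAt_iff' _ _ _ _ (ChainComplex.prev _ _) (ChainComplex.next_nat_succ _)]
        exact exactS f M P hJ hJJ _
      · apply ChainComplex.exactAt_succ_single_obj⟩

variable {k : Type} [Field k] [Algebra k R] [Algebra k S]
    (hk : ∀ c : k, f (algebraMap k R c) = algebraMap k S c)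

/-- linear hom equivalence -/
noncomputable def homLin (P : ModuleCat.{0} R) (N : ModuleCat.{0} S) :
    ((F f).obj P ⟶ N) ≃ₗ[k] (P ⟶ (ModuleCat.restrictScalars f).obj N) :=
  { homEq f P N with
    map_smul' := fun c φ => by
      refine ModuleCat.hom_ext (LinearMap.ext fun x => ?_)
      change algebraMap k S c • (φ.hom (Qt.mk f P x) : N) =
        f (algebraMap k R c) • (φ.hom (Qt.mk f P x) : N)
      rw [hk] }

include hk in
lemma main (hJ : Module.Projective R (RingHom.ker f))
    (hJJ : RingHom.ker f * RingHom.ker f = RingHom.ker f) (N : ModuleCat.{0} S) (n : ℕ) :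
    Nonempty ((((Ext k (ModuleCat.{0} R) n).obj
            (Opposite.op ((ModuleCat.restrictScalars f).obj M))).obj
          ((ModuleCat.restrictScalars f).obj N)) ≅
        (((Ext k (ModuleCat.{0} S) n).obj (Opposite.op M)).obj N)) := by
  let P := ProjectiveResolution.of ((ModuleCat.restrictScalars.{0} f).obj M)
  let Q := newRes f M P hJ hJJ
  have e : P.complex.linearYonedaObj k ((ModuleCat.restrictScalars f).obj N) ≅
      Q.complex.linearYonedaObj k N :=
    HomologicalComplex.Hom.isoOfComponents
      (fun i => (homLin f hk (P.complex.X i) N).symm.toModuleIso) (fun i j _ => by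
        refine ModuleCat.hom_ext (LinearMap.ext fun φ => ?_)
        exact ModuleCat.hom_ext (Qt.hom_ext f fun x => rfl))
  exact ⟨P.isoExt n _ ≪≫ (HomologicalComplex.homologyFunctor _ _ n).mapIso e ≪≫
    (Q.isoExt n _).symm⟩
end res
end HEpi

/-- if `I` is an idempotent two-sided ideal of a `k`-algebra `A` (the kernel
of a surjective `k`-algebra map `π : A → B`, so `B ≅ A/I`) which is projective as a right
`A`-module (`K` is `I` viewed as a right `A`-submodule of `A`), then for right
`A/I`-modules `M, N` with `M` finitely generated and every `n ≥ 0`,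
`Ext^n_A(M, N) ≅ Ext^n_{A/I}(M, N)`. -/
theorem stmt4 (k : Type) [Field k] (A B : Type) [Ring A] [Ring B]
    [Algebra k A] [Algebra k B]
    (π : A →ₐ[k] B) (hsurj : Function.Surjective π)
    (hidem : Submodule.span k {y : A | ∃ a ∈ RingHom.ker π, ∃ b ∈ RingHom.ker π, y = a * b}
      = Submodule.restrictScalars k (RingHom.ker π))
    (K : Submodule Aᵐᵒᵖ A) (hK : (K : Set A) = (RingHom.ker π : Set A))
    (hproj : Module.Projective Aᵐᵒᵖ K)
    (M N : ModuleCat Bᵐᵒᵖ) (hM : Module.Finite Bᵐᵒᵖ M) (n : ℕ) :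
    Nonempty
      ((((Ext k (ModuleCat Aᵐᵒᵖ) n).obj
            (Opposite.op ((ModuleCat.restrictScalars (RingHom.op π.toRingHom)).obj M))).obj
          ((ModuleCat.restrictScalars (RingHom.op π.toRingHom)).obj N)) ≅
        (((Ext k (ModuleCat Bᵐᵒᵖ) n).obj (Opposite.op M)).obj N)) := by
  haveI : Fact (Function.Surjective (RingHom.op π.toRingHom)) := ⟨fun b => by
    obtain ⟨a, ha⟩ := hsurj b.unop
    exact ⟨MulOpposite.op a, congrArg MulOpposite.op ha⟩⟩
  refine HEpi.main (RingHom.op π.toRingHom) M (fun c => ?_) ?_ ?_ N n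
  · exact congrArg MulOpposite.op (π.commutes c)
  · have hmem : ∀ a : A, a ∈ K ↔ π a = 0 := fun a => by
      rw [← SetLike.mem_coe, hK]; exact Iff.rfl
    refine Module.Projective.of_equiv (M := K) (LinearEquiv.ofBijective
      (σ₁₂ := RingHom.id Aᵐᵒᵖ) (M₂ := RingHom.ker (RingHom.op π.toRingHom))
      { toFun := fun a => ⟨MulOpposite.op a.1, congrArg MulOpposite.op ((hmem a.1).1 a.2)⟩
        map_add' := fun a b => rfl
        map_smul' := fun r a => rfl } ⟨?_, ?_⟩)
    · intro a b hab
      exact Subtype.ext (MulOpposite.op_injective (congrArg Subtype.val hab))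
    · rintro ⟨b, hb⟩
      exact ⟨⟨b.unop, (hmem _).2 (congrArg MulOpposite.unop hb)⟩, rfl⟩
  · apply le_antisymm Ideal.mul_le_right
    intro x hx
    have hx' : x.unop ∈ Submodule.restrictScalars k (RingHom.ker π) :=
      congrArg MulOpposite.unop (show RingHom.op π.toRingHom x = 0 from hx)
    rw [← hidem] at hx'
    have key : ∀ y ∈ Submodule.span k
        {y : A | ∃ a ∈ RingHom.ker π, ∃ b ∈ RingHom.ker π, y = a * b},
        MulOpposite.op y ∈ RingHom.ker (RingHom.op π.toRingHom) *
          RingHom.ker (RingHom.op π.toRingHom) := by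
      intro y hy
      induction hy using Submodule.span_induction with
      | mem y hy =>
        obtain ⟨a, ha, b, hb, rfl⟩ := hy
        rw [MulOpposite.op_mul]
        exact Ideal.mul_mem_mul (congrArg MulOpposite.op hb) (congrArg MulOpposite.op ha)
      | zero => exact zero_mem _
      | add y z _ _ h1 h2 => exact add_mem h1 h2
      | smul c y _ h =>
        rw [Algebra.smul_def, Algebra.commutes, MulOpposite.op_mul]
        exact Ideal.mul_mem_left _ _ h
    exact key _ hx'
end

section
/- Let S be a finite regular monoid, k a field, and I ⊆ S a two-sided semigroup ideal of S. Then the k-linear span kI of I inside the monoid algebra kS is a two-sided ideal of kS, and for all finitely generated right kS/kI-modules M and N and all n ≥ 0 there is an isomorphism Ext^n_{kS}(M, N) ≅ Ext^n_{kS/kI}(M, N), where M and N are regarded as kS-modules via the projection kS → kS/kI. -/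
open CategoryTheory

section Comb
variable {S : Type} [Monoid S] [Finite S]

lemma stab_left (e l x z : S) (hl : l * e = l) (h : e = x * l * z) : ∃ y, e = y * l := by
  obtain ⟨i, j, hij, hm⟩ := Finite.exists_ne_map_eq_of_infinite (fun n : ℕ => (x * l) ^ n)
  wlog hlt : i < j generalizing i j
  · exact this j i hij.symm hm.symm (by omega)
  have key : ∀ n : ℕ, (x * l) ^ (n + 1) * z ^ (n + 1) = e := by
    intro n
    induction n with
    | zero => simp [← h]
    | succ n ih =>
      have h3 : (x * l) ^ (n + 1) * e = (x * l) ^ (n + 1) := by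
        rw [pow_succ, mul_assoc, mul_assoc, hl]
      calc (x * l) ^ (n + 1 + 1) * z ^ (n + 1 + 1)
          = (x * l) ^ (n + 1) * (x * l * z) * z ^ (n + 1) := by
            rw [pow_succ, pow_succ' z (n + 1)]; simp only [mul_assoc]
        _ = e := by rw [← h, h3, ih]
  obtain ⟨p, rfl⟩ := Nat.exists_eq_add_of_lt hlt
  have h1 : (x * l) ^ (p + 1) * e = e := by
    have h4 : (x * l) ^ (i + 1) = (x * l) ^ (p + 1) * (x * l) ^ (i + 1) := by
      rw [← pow_add, pow_succ, hm, ← pow_succ]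
      congr 1; omega
    calc (x * l) ^ (p + 1) * e = (x * l) ^ (p + 1) * ((x * l) ^ (i + 1) * z ^ (i + 1)) := by
          rw [key]
      _ = e := by rw [← mul_assoc, ← h4, key]
  refine ⟨(x * l) ^ p * x, ?_⟩
  rw [← h1, pow_succ]
  simp only [mul_assoc, hl]

lemma stab_right (e r x z : S) (hr : e * r = r) (h : e = x * r * z) : ∃ y, e = r * y := by
  have : Finite Sᵐᵒᵖ := Finite.of_equiv S MulOpposite.opEquiv
  obtain ⟨y, hy⟩ := stab_left (S := Sᵐᵒᵖ) (MulOpposite.op e) (MulOpposite.op r)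
    (MulOpposite.op z) (MulOpposite.op x)
    (by rw [← MulOpposite.op_mul, hr])
    (by rw [← MulOpposite.op_mul, ← MulOpposite.op_mul, ← mul_assoc, ← h])
  exact ⟨y.unop, by simpa using congrArg MulOpposite.unop hy⟩

structure StepData (I I' : Set S) (e : S) (T : Finset S) : Prop where
  ideal' : ∀ a ∈ I', ∀ s : S, a * s ∈ I' ∧ s * a ∈ I'
  sub : I' ⊆ I
  eI : e ∈ I
  eI' : e ∉ I'
  idem : e * e = e
  eT : ∀ r ∈ T, e * r = r
  dec : ∀ u ∈ I, u ∉ I' → ∃ l, ∃ r ∈ T, l * e = l ∧ u = l * r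
  nv : ∀ l, l * e = l → l ∉ I' → ∀ r ∈ T, l * r ∉ I'
  inj : ∀ l l' : S, l * e = l → l' * e = l' → l ∉ I' → ∀ r ∈ T, ∀ r' ∈ T,
    l * r = l' * r' → l = l' ∧ r = r'

lemma exists_step (hreg : ∀ s : S, ∃ t : S, s * t * s = s)
    (I : Set S) (hne : I.Nonempty)
    (hI : ∀ a ∈ I, ∀ s : S, a * s ∈ I ∧ s * a ∈ I) :
    ∃ I' e T, StepData I I' e T := by
  classical
  have : Fintype S := Fintype.ofFinite S
  let D : S → Set S := fun s => {u | ∃ a b, u = a * s * b}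
  have Dtr : ∀ {s t}, s ∈ D t → D s ⊆ D t := by
    rintro s t ⟨a, b, rfl⟩ u ⟨c, d, rfl⟩
    exact ⟨c * a, b * d, by simp only [mul_assoc]⟩
  obtain ⟨s, hs, hmax⟩ := Set.exists_max_image I (fun s => (D s).ncard) (Set.toFinite I) hne
  obtain ⟨t, ht⟩ := hreg s
  set e := t * s with he
  have se : s * e = s := by rw [he, ← mul_assoc, ht]
  have ee : e * e = e := by rw [he, mul_assoc, ← he, se]
  have eI : e ∈ I := (hI s hs t).2
  have sDe : s ∈ D e := ⟨s, 1, by rw [mul_one, se]⟩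
  have eDs : e ∈ D s := ⟨t, 1, by rw [mul_one]⟩
  have max' : ∀ u ∈ I, e ∈ D u → u ∈ D e := by
    intro u hu h
    have h1 : D s ⊆ D u := (Dtr sDe).trans (Dtr h)
    have h2 : D s = D u := Set.eq_of_subset_of_ncard_le h1 (hmax u hu) (Set.toFinite _)
    apply Dtr sDe
    rw [h2]
    exact ⟨1, 1, by simp⟩
  let I' : Set S := {u | u ∈ I ∧ e ∉ D u}
  have hI' : ∀ a ∈ I', ∀ s : S, a * s ∈ I' ∧ s * a ∈ I' := by
    intro a ha s
    refine ⟨⟨(hI a ha.1 s).1, fun h => ha.2 (Dtr (?_ : a * s ∈ D a) h)⟩,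
      ⟨(hI a ha.1 s).2, fun h => ha.2 (Dtr (?_ : s * a ∈ D a) h)⟩⟩
    · exact ⟨1, s, by simp⟩
    · exact ⟨s, 1, by simp⟩
  have lI : ∀ l, l * e = l → l ∈ I := fun l hl => hl ▸ (hI e eI l).2
  have rI : ∀ r, e * r = r → r ∈ I := fun l hl => hl ▸ (hI e eI l).1
  let X : S → Set S := fun r => {u | ∃ a, u = a * r}
  let Good : S → Prop := fun r => e * r = r ∧ r ∉ I'
  let rep : Set S → S := fun Y => if h : ∃ r, Good r ∧ X r = Y then h.choose else 1
  have hrep : ∀ r, Good r → Good (rep (X r)) ∧ X (rep (X r)) = X r := by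
    intro r hr
    have h : ∃ r', Good r' ∧ X r' = X r := ⟨r, hr, rfl⟩
    simp only [rep, dif_pos h]
    exact h.choose_spec
  let T : Finset S := Finset.univ.filter fun r => Good r ∧ rep (X r) = r
  have hT : ∀ r, r ∈ T ↔ Good r ∧ rep (X r) = r := by intro r; simp [T]
  have eL : ∀ l, l * e = l → l ∉ I' → ∃ y, e = y * l := by
    intro l hl h
    have : e ∈ D l := by
      by_contra h'
      exact h ⟨lI l hl, h'⟩
    obtain ⟨a, b, hab⟩ := this
    exact stab_left e l a b hl hab
  have eR : ∀ r, Good r → ∃ y, e = r * y := by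
    rintro r ⟨hr, h⟩
    have : e ∈ D r := by
      by_contra h'
      exact h ⟨rI r hr, h'⟩
    obtain ⟨a, b, hab⟩ := this
    exact stab_right e r a b hr hab
  refine ⟨I', e, T, hI', fun u hu => hu.1, eI, fun h => h.2 ⟨1, 1, by simp⟩, ee,
    fun r hr => ((hT r).1 hr).1.1, ?_, ?_, ?_⟩
  · intro u hu hu'
    have heu : e ∈ D u := by
      by_contra h'
      exact hu' ⟨hu, h'⟩
    obtain ⟨a, b, hab⟩ := max' u hu heu
    have hg : Good (e * b) := by
      refine ⟨by rw [← mul_assoc, ee], fun h => hu' ?_⟩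
      rw [hab, mul_assoc]
      exact (hI' _ h a).2
    obtain ⟨g1, g2⟩ := hrep _ hg
    have : e * b ∈ X (rep (X (e * b))) := by rw [g2]; exact ⟨1, by simp⟩
    obtain ⟨x, hx⟩ := this
    refine ⟨a * e * x * e, rep (X (e * b)), (hT _).2 ⟨g1, by rw [g2]⟩, ?_, ?_⟩
    · rw [mul_assoc, ee]
    · rw [mul_assoc _ e, g1.1, mul_assoc _ x, ← hx, hab, mul_assoc a e (e * b), ← mul_assoc e e, ee,
        mul_assoc]
  · intro l hl hl' r hr h
    obtain ⟨y, hy⟩ := eL l hl hl'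
    obtain ⟨z, hz⟩ := eR r ((hT r).1 hr).1
    apply h.2
    refine ⟨y, z, ?_⟩
    rw [← mul_assoc, ← hy, mul_assoc, ← hz, ee]
  · intro l l' hl hl' h r hr r' hr' heq
    have nv : l' ∉ I' := by
      intro h'
      have h1 : l * r ∈ I' := heq ▸ (hI' _ h' r').1
      obtain ⟨z, hz⟩ := eR r ((hT r).1 hr).1
      have := (hI' _ h1 z).1
      rw [mul_assoc, ← hz, hl] at this
      exact h this
    obtain ⟨y, hy⟩ := eL l hl h
    obtain ⟨y', hy'⟩ := eL l' hl' nv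
    obtain ⟨gr, hrr⟩ := (hT r).1 hr
    obtain ⟨gr', hrr'⟩ := (hT r').1 hr'
    have h1 : r = y * l' * r' := by rw [mul_assoc, ← heq, ← mul_assoc, ← hy, gr.1]
    have h2 : r' = y' * l * r := by rw [mul_assoc, heq, ← mul_assoc, ← hy', gr'.1]
    have hX : X r = X r' := by
      ext u
      constructor
      · rintro ⟨a, rfl⟩
        exact ⟨a * (y * l'), by rw [mul_assoc, ← h1]⟩
      · rintro ⟨a, rfl⟩
        exact ⟨a * (y' * l), by rw [mul_assoc, ← h2]⟩
    have hrr2 : r = r' := by rw [← hrr, ← hrr', hX]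
    subst hrr2
    obtain ⟨z, hz⟩ := eR r gr
    refine ⟨?_, rfl⟩
    rw [← hl, ← hl', hz, ← mul_assoc, heq, mul_assoc]
end Comb

section Alg
variable {k : Type} [Field k] {S : Type} [Monoid S]

noncomputable def sg (k : Type) [Field k] {S : Type} [Monoid S] (s : S) : (MonoidAlgebra k S)ᵐᵒᵖ :=
  MulOpposite.op (MonoidAlgebra.single s 1)

lemma sg_mul (s t : S) : sg k s * sg k t = sg k (t * s) := by
  simp [sg, ← MulOpposite.op_mul, MonoidAlgebra.single_mul_single]

lemma sg_smul_smul {P : Type} [AddCommGroup P] [Module (MonoidAlgebra k S)ᵐᵒᵖ P] (s t : S) (p : P) :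
    sg k s • sg k t • p = sg k (t * s) • p := by
  rw [smul_smul, sg_mul]

noncomputable def PI (k : Type) [Field k] {S : Type} [Monoid S] (I : Set S)
    (P : Type) [AddCommGroup P] [Module (MonoidAlgebra k S)ᵐᵒᵖ P] :
    Submodule (MonoidAlgebra k S)ᵐᵒᵖ P :=
  Submodule.span _ {x | ∃ s ∈ I, ∃ p : P, x = sg k s • p}

section
variable {P Q : Type} [AddCommGroup P] [Module (MonoidAlgebra k S)ᵐᵒᵖ P]
  [AddCommGroup Q] [Module (MonoidAlgebra k S)ᵐᵒᵖ Q]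

lemma sg_smul_mem {I : Set S} {s : S} (hs : s ∈ I) (p : P) : sg k s • p ∈ PI k I P :=
  Submodule.subset_span ⟨s, hs, p, rfl⟩

lemma PI_mono {I I' : Set S} (h : I' ⊆ I) : PI k I' P ≤ PI k I P := by
  apply Submodule.span_mono
  rintro x ⟨s, hs, p, rfl⟩
  exact ⟨s, h hs, p, rfl⟩

lemma PI_empty : PI k (∅ : Set S) P = ⊥ := by
  simp [PI]

lemma PI_map (I : Set S) (f : P →ₗ[(MonoidAlgebra k S)ᵐᵒᵖ] Q) {x : P} (hx : x ∈ PI k I P) :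
    f x ∈ PI k I Q := by
  have : PI k I P ≤ (PI k I Q).comap f := by
    apply Submodule.span_le.2
    rintro x ⟨s, hs, p, rfl⟩
    simp only [Submodule.comap_coe, Set.mem_preimage, map_smul, SetLike.mem_coe]
    exact sg_smul_mem hs _
  exact this hx

lemma PI_induction {I : Set S} (hI : ∀ a ∈ I, ∀ s : S, a * s ∈ I ∧ s * a ∈ I)
    {motive : P → Prop} (h0 : motive 0) (hadd : ∀ x y, motive x → motive y → motive (x + y))
    (hg : ∀ s ∈ I, ∀ p, motive (sg k s • p)) {x : P} (hx : x ∈ PI k I P) : motive x := by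
  let G : AddSubmonoid P := AddSubmonoid.closure {x | ∃ s ∈ I, ∃ p : P, x = sg k s • p}
  have hG : x ∈ G := by
    refine Submodule.span_induction ?_ (zero_mem _) (fun _ _ _ _ => add_mem) ?_ hx
    · rintro x hx
      exact AddSubmonoid.subset_closure hx
    · intro a x hx0 hx
      clear hx0
      induction hx using AddSubmonoid.closure_induction with
      | zero => simp
      | add x y _ _ h1 h2 => rw [smul_add]; exact add_mem h1 h2
      | mem x hx =>
        obtain ⟨s, hs, p, rfl⟩ := hx
        obtain ⟨a, rfl⟩ := MulOpposite.op_surjective a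
        induction a using MonoidAlgebra.induction_linear with
        | zero => simp
        | add f g hf hg => rw [MulOpposite.op_add, add_smul]; exact add_mem hf hg
        | single t c =>
          apply AddSubmonoid.subset_closure
          refine ⟨s * t, (hI s hs t).1, MulOpposite.op (MonoidAlgebra.single (1 : S) c) • p, ?_⟩
          simp [smul_smul, sg, ← MulOpposite.op_mul, MonoidAlgebra.single_mul_single]
  clear hx
  induction hG using AddSubmonoid.closure_induction with
  | zero => exact h0
  | add x y _ _ h1 h2 => exact hadd _ _ h1 h2
  | mem x hx =>
    obtain ⟨s, hs, p, rfl⟩ := hx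
    exact hg s hs p
end

lemma mem_PI_self {I : Set S} (hI : ∀ a ∈ I, ∀ s : S, a * s ∈ I ∧ s * a ∈ I)
    (x : (MonoidAlgebra k S)ᵐᵒᵖ) :
    x ∈ PI k I (MonoidAlgebra k S)ᵐᵒᵖ ↔ ∀ s ∉ I, x.unop.coeff s = 0 := by
  constructor
  · intro hx
    refine PI_induction hI (motive := fun x => ∀ s ∉ I, x.unop.coeff s = 0) ?_ ?_ ?_ hx
    · simp
    · intro x y hx hy s hs
      simp [hx s hs, hy s hs]
    · intro s hs p t ht
      simp only [sg, smul_eq_mul, MulOpposite.unop_mul, MulOpposite.unop_op]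
      apply MonoidAlgebra.coeff_mul_single_of_forall_mul_ne
      rintro d rfl
      exact ht (hI s hs d).2
  · intro hx
    obtain ⟨x, rfl⟩ := MulOpposite.op_surjective x
    rw [← MonoidAlgebra.sum_coeff_single x, Finsupp.sum, Finset.op_sum]
    refine Submodule.sum_mem _ fun s hs => ?_
    have : s ∈ I := by
      by_contra h
      exact (Finsupp.mem_support_iff.1 hs) (hx s h)
    convert sg_smul_mem (k := k) this (MulOpposite.op (MonoidAlgebra.single (1 : S) (x.coeff s)))
    simp [sg, ← MulOpposite.op_mul, MonoidAlgebra.single_mul_single]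

lemma step_ring {I I' : Set S} {e : S} {T : Finset S} (h : StepData I I' e T)
    (a : S → (MonoidAlgebra k S)ᵐᵒᵖ) (ha : ∀ r ∈ T, sg k e • a r = a r)
    (hsum : ∑ r ∈ T, sg k r • a r ∈ PI k I' (MonoidAlgebra k S)ᵐᵒᵖ) :
    ∀ r ∈ T, a r ∈ PI k I' (MonoidAlgebra k S)ᵐᵒᵖ := by
  classical
  have supp : ∀ r ∈ T, ∀ l, (a r).unop.coeff l ≠ 0 → l * e = l := by
    intro r hr l hl
    by_contra hne
    apply hl
    rw [← ha r hr]
    simp only [sg, smul_eq_mul, MulOpposite.unop_mul, MulOpposite.unop_op]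
    apply MonoidAlgebra.coeff_mul_single_of_forall_mul_ne
    rintro d rfl
    exact hne (by rw [mul_assoc, h.idem])
  intro r hr
  rw [mem_PI_self h.ideal'] at hsum ⊢
  intro l hl
  by_contra hne
  apply hne
  have hle := supp r hr l hne
  have := hsum (l * r) (h.nv l hle hl r hr)
  rw [Finset.unop_sum, MonoidAlgebra.coeff_sum, Finsupp.finsetSum_apply,
    Finset.sum_eq_single r] at this
  · simp only [sg, smul_eq_mul, MulOpposite.unop_mul, MulOpposite.unop_op] at this
    rw [MonoidAlgebra.coeff_mul_single_eq_coeff_mul l, mul_one] at this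
    · exact this
    · intro m hm
      refine ⟨fun heq => ?_, fun heq => by rw [heq]⟩
      exact (h.inj l m hle (supp r hr m (Finsupp.mem_support_iff.1 hm)) hl r hr r hr heq.symm).1.symm
  · intro r' hr' hrr
    have key : (a r').unop * MonoidAlgebra.single r' (1 : k) =
      ∑ m ∈ (a r').unop.coeff.support,
        MonoidAlgebra.single (m * r') ((a r').unop.coeff m) := by
      conv_lhs => rw [← MonoidAlgebra.sum_coeff_single (a r').unop, Finsupp.sum, Finset.sum_mul]
      simp [MonoidAlgebra.single_mul_single]
    simp only [sg, smul_eq_mul, MulOpposite.unop_mul, MulOpposite.unop_op]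
    rw [key, MonoidAlgebra.coeff_sum, Finsupp.finsetSum_apply]
    refine Finset.sum_eq_zero fun m hm => ?_
    rw [MonoidAlgebra.coeff_single, Finsupp.single_apply, if_neg]
    intro heq
    exact hrr (h.inj l m hle (supp r' hr' m (Finsupp.mem_support_iff.1 hm)) hl r hr r' hr'
      heq.symm).2.symm
  · exact fun h => absurd hr h

variable {P Q : Type} [AddCommGroup P] [Module (MonoidAlgebra k S)ᵐᵒᵖ P]

lemma step_proj {I I' : Set S} {e : S} {T : Finset S} (h : StepData I I' e T)
    [Module.Projective (MonoidAlgebra k S)ᵐᵒᵖ P]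
    (y : S → P) (hy : ∀ r ∈ T, sg k e • y r = y r)
    (hsum : ∑ r ∈ T, sg k r • y r ∈ PI k I' P) :
    ∀ r ∈ T, y r ∈ PI k I' P := by
  obtain ⟨i, hi⟩ := (Module.projective_def' (R := (MonoidAlgebra k S)ᵐᵒᵖ) (P := P)).1 inferInstance
  intro r hr
  have h1 : ∀ p : P, i (y r) p ∈ PI k I' (MonoidAlgebra k S)ᵐᵒᵖ := by
    intro p
    refine step_ring h (fun r => i (y r) p) ?_ ?_ r hr
    · intro r hr
      rw [← Finsupp.smul_apply, ← map_smul, hy r hr]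
    · have := PI_map I' (Finsupp.lapply p ∘ₗ i) hsum
      simpa using this
  have h2 : i (y r) ∈ PI k I' (P →₀ (MonoidAlgebra k S)ᵐᵒᵖ) := by
    rw [← Finsupp.sum_single (i (y r))]
    refine Submodule.sum_mem _ fun p _ => ?_
    exact PI_map I' (Finsupp.lsingle p) (h1 p)
  have h3 := PI_map I' (Finsupp.linearCombination (MonoidAlgebra k S)ᵐᵒᵖ id) h2
  rw [← LinearMap.comp_apply, hi] at h3
  simpa using h3

lemma step_dec {I I' : Set S} (hI : ∀ a ∈ I, ∀ s : S, a * s ∈ I ∧ s * a ∈ I)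
    {e : S} {T : Finset S} (h : StepData I I' e T) {x : P} (hx : x ∈ PI k I P) :
    ∃ y : S → P, (∀ r ∈ T, sg k e • y r = y r) ∧ x - ∑ r ∈ T, sg k r • y r ∈ PI k I' P := by
  classical
  refine PI_induction hI (motive := fun x => ∃ y : S → P, (∀ r ∈ T, sg k e • y r = y r) ∧
    x - ∑ r ∈ T, sg k r • y r ∈ PI k I' P) ?_ ?_ ?_ hx
  · exact ⟨0, by simp⟩
  · rintro x x' ⟨y, hy, h1⟩ ⟨y', hy', h1'⟩
    refine ⟨y + y', fun r hr => by simp [hy r hr, hy' r hr], ?_⟩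
    have := add_mem h1 h1'
    convert this using 1
    simp only [Pi.add_apply, smul_add, Finset.sum_add_distrib]
    abel
  · intro u hu p
    by_cases hu' : u ∈ I'
    · exact ⟨0, by simp, by simpa using sg_smul_mem hu' p⟩
    · obtain ⟨l, r, hr, hl, rfl⟩ := h.dec u hu hu'
      refine ⟨Pi.single r (sg k l • p), ?_, ?_⟩
      · intro r' _
        by_cases hrr : r' = r
        · subst hrr
          simp [sg_smul_smul, hl]
        · simp [hrr]
      · rw [Finset.sum_eq_single r]
        · simp [sg_smul_smul]
        · intro r' _ hrr
          simp [hrr]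
        · exact fun h => absurd hr h

lemma main_exact [Finite S] (hreg : ∀ s : S, ∃ t : S, s * t * s = s)
    (P : ℕ → Type) [∀ n, AddCommGroup (P n)] [∀ n, Module (MonoidAlgebra k S)ᵐᵒᵖ (P n)]
    [∀ n, Module.Projective (MonoidAlgebra k S)ᵐᵒᵖ (P n)]
    (M : Type) [AddCommGroup M] [Module (MonoidAlgebra k S)ᵐᵒᵖ M]
    (d : ∀ n, P (n + 1) →ₗ[(MonoidAlgebra k S)ᵐᵒᵖ] P n)
    (ε : P 0 →ₗ[(MonoidAlgebra k S)ᵐᵒᵖ] M)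
    (hd : ∀ n x, d n (d (n + 1) x) = 0)
    (hex : ∀ n x, d n x = 0 → ∃ w, d (n + 1) w = x)
    (hex0 : ∀ x, ε x = 0 → ∃ w, d 0 w = x)
    (I : Set S) (hI : ∀ a ∈ I, ∀ s : S, a * s ∈ I ∧ s * a ∈ I)
    (hM : ∀ s ∈ I, ∀ m : M, sg k s • m = 0) :
    ∀ n x, d n x ∈ PI k I (P n) → ∃ w, x - d (n + 1) w ∈ PI k I (P (n + 1)) := by
  induction hc : I.ncard using Nat.strong_induction_on generalizing I with
  | _ c ih =>
  rcases I.eq_empty_or_nonempty with rfl | hne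
  · intro n x hx
    simp only [PI_empty, Submodule.mem_bot] at hx ⊢
    obtain ⟨w, hw⟩ := hex n x hx
    exact ⟨w, by rw [hw, sub_self]⟩
  obtain ⟨I', e, T, h⟩ := exists_step hreg I hne hI
  have ih' := ih I'.ncard (by
    rw [← hc]
    exact Set.ncard_lt_ncard (Set.ssubset_iff_exists.2 ⟨h.sub, e, h.eI, h.eI'⟩) (Set.toFinite _))
    I' h.ideal' (fun s hs => hM s (h.sub hs)) rfl
  intro n x hx
  obtain ⟨y, hy, hxy⟩ := step_dec hI h hx
  have hw : ∀ r ∈ T, ∃ w, y r - d n w ∈ PI k I' (P n) := by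
    cases n with
    | zero =>
      intro r hr
      obtain ⟨w, hw⟩ := hex0 (y r) (by rw [← hy r hr, map_smul, hM e h.eI])
      exact ⟨w, by simp [hw]⟩
    | succ n =>
      have h1 := PI_map I' (d n) hxy
      rw [map_sub, hd, zero_sub, neg_mem_iff, map_sum] at h1
      simp only [map_smul] at h1
      have h2 := step_proj h (fun r => d n (y r))
        (fun r hr => by rw [← map_smul, hy r hr]) h1
      intro r hr
      exact ih' n (y r) (h2 r hr)
  choose! w hw using hw
  have h3 : d n (x - ∑ r ∈ T, sg k r • sg k e • w r) ∈ PI k I' (P n) := by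
    have h4 : ∑ r ∈ T, sg k r • sg k e • (y r - d n (w r)) ∈ PI k I' (P n) :=
      Submodule.sum_mem _ fun r hr => Submodule.smul_mem _ _ (Submodule.smul_mem _ _ (hw r hr))
    convert add_mem hxy h4 using 1
    simp only [map_sub, map_sum, map_smul, smul_sub, Finset.sum_sub_distrib]
    have : ∑ r ∈ T, sg k r • sg k e • y r = ∑ r ∈ T, sg k r • y r :=
      Finset.sum_congr rfl fun r hr => by rw [hy r hr]
    rw [this]
    abel
  obtain ⟨v, hv⟩ := ih' n _ h3
  refine ⟨v, ?_⟩
  have h5 : ∑ r ∈ T, sg k r • sg k e • w r ∈ PI k I (P (n + 1)) :=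
    Submodule.sum_mem _ fun r hr => Submodule.smul_mem _ _ (sg_smul_mem h.eI _)
  convert add_mem (PI_mono h.sub hv) h5 using 1
  abel
end Alg

section Fun
variable {R R' : Type} [Ring R] [Ring R'] (φ : R →+* R')

def KP (P : Type) [AddCommGroup P] [Module R P] : Submodule R P :=
  Submodule.span R {x | ∃ (a : R) (p : P), φ a = 0 ∧ x = a • p}

variable {φ}

lemma KP_smul_mem {P : Type} [AddCommGroup P] [Module R P] {a : R} (ha : φ a = 0) (p : P) :
    a • p ∈ KP φ P := Submodule.subset_span ⟨a, p, ha, rfl⟩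

lemma KP_le {P Q : Type} [AddCommGroup P] [Module R P] [AddCommGroup Q] [Module R Q]
    (f : P →ₗ[R] Q) : KP φ P ≤ (KP φ Q).comap f := by
  apply Submodule.span_le.2
  rintro x ⟨a, p, ha, rfl⟩
  simp only [Submodule.comap_coe, Set.mem_preimage, map_smul, SetLike.mem_coe]
  exact KP_smul_mem ha _

noncomputable abbrev qSMul (hφ : Function.Surjective φ) (P : Type) [AddCommGroup P] [Module R P] :
    SMul R' (P ⧸ KP φ P) where
  smul c x := Function.surjInv hφ c • x

lemma q_smul (hφ : Function.Surjective φ) (P : Type) [AddCommGroup P] [Module R P]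
    (c : R) (x : P ⧸ KP φ P) : (qSMul hφ P).smul (φ c) x = c • x := by
  change Function.surjInv hφ (φ c) • x = c • x
  obtain ⟨p, rfl⟩ := Submodule.mkQ_surjective _ x
  rw [← map_smul, ← map_smul, ← sub_eq_zero, ← map_sub, ← sub_smul]
  rw [Submodule.mkQ_apply, Submodule.Quotient.mk_eq_zero]
  apply KP_smul_mem
  rw [map_sub, Function.surjInv_eq hφ, sub_self]

noncomputable abbrev qModule (hφ : Function.Surjective φ) (P : Type) [AddCommGroup P] [Module R P] :
    Module R' (P ⧸ KP φ P) :=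
  letI := qSMul hφ P
  hφ.moduleLeft φ (q_smul hφ P)

noncomputable def qObj (hφ : Function.Surjective φ) (P : ModuleCat.{0} R) : ModuleCat.{0} R' :=
  letI := qModule hφ P
  ModuleCat.of R' (P ⧸ KP φ P)

noncomputable def qmk (hφ : Function.Surjective φ) (P : ModuleCat.{0} R) :
    P →+ qObj hφ P := (KP φ P).mkQ.toAddMonoidHom

lemma qmk_smul (hφ : Function.Surjective φ) (P : ModuleCat.{0} R) (c : R) (p : P) :
    qmk hφ P (c • p) = φ c • qmk hφ P p :=
  ((KP φ P).mkQ.map_smul c p).trans (q_smul hφ P c ((KP φ P).mkQ p)).symm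

lemma qmk_surj (hφ : Function.Surjective φ) (P : ModuleCat.{0} R) :
    Function.Surjective (qmk hφ P) := Submodule.mkQ_surjective _

lemma qmk_eq_zero (hφ : Function.Surjective φ) (P : ModuleCat.{0} R) (p : P) :
    qmk hφ P p = 0 ↔ p ∈ KP φ P := Submodule.Quotient.mk_eq_zero _

noncomputable def qlift (hφ : Function.Surjective φ) {P : ModuleCat.{0} R} {N : ModuleCat.{0} R'}
    (f : P →+ N) (hf : ∀ c p, f (c • p) = φ c • f p) : qObj hφ P ⟶ N :=
  ModuleCat.ofHom (X := qObj hφ P) (Y := N)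
  { toFun := QuotientAddGroup.lift (KP φ P).toAddSubgroup f (by
      intro x hx
      refine Submodule.span_induction (p := fun x _ => f x = 0) ?_ ?_ ?_ ?_ hx
      · rintro x ⟨a, p, ha, rfl⟩
        rw [hf, ha, zero_smul]
      · simp
      · intro x y _ _ hx hy
        rw [map_add, hx, hy, add_zero]
      · intro a x _ hx
        rw [hf, hx, smul_zero])
    map_add' := map_add _
    map_smul' := by
      intro c x
      obtain ⟨c, rfl⟩ := hφ c
      obtain ⟨p, rfl⟩ := qmk_surj hφ P x
      exact (congrArg _ (qmk_smul hφ P c p).symm).trans (hf c p) }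

lemma qlift_mk (hφ : Function.Surjective φ) {P : ModuleCat.{0} R} {N : ModuleCat.{0} R'}
    (f : P →+ N) (hf : ∀ c p, f (c • p) = φ c • f p) (p : P) :
    (qlift hφ f hf).hom (qmk hφ P p) = f p := rfl

lemma q_hom_ext (hφ : Function.Surjective φ) {P : ModuleCat.{0} R} {N : ModuleCat.{0} R'}
    {f g : qObj hφ P ⟶ N} (h : ∀ p, f.hom (qmk hφ P p) = g.hom (qmk hφ P p)) : f = g := by
  ext x
  obtain ⟨p, rfl⟩ := qmk_surj hφ P x
  exact h p

noncomputable def qF (hφ : Function.Surjective φ) : ModuleCat.{0} R ⥤ ModuleCat.{0} R' where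
  obj P := qObj hφ P
  map {P Q} f := qlift hφ ((qmk hφ Q).comp f.hom.toAddMonoidHom) (by
    intro c p
    simp [qmk_smul])
  map_id P := by
    apply q_hom_ext
    intro p
    rfl
  map_comp f g := by
    apply q_hom_ext
    intro p
    rfl

lemma qF_map_mk (hφ : Function.Surjective φ) {P Q : ModuleCat.{0} R} (f : P ⟶ Q) (p : P) :
    ((qF hφ).map f).hom (qmk hφ P p) = qmk hφ Q (f.hom p) := rfl

instance (hφ : Function.Surjective φ) : (qF hφ).Additive where
  map_add {P Q f g} := by
    apply q_hom_ext
    intro p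
    exact map_add (qmk hφ Q) (f.hom p) (g.hom p)

noncomputable def qEquiv (hφ : Function.Surjective φ) (P : ModuleCat.{0} R) (N : ModuleCat.{0} R') :
    ((qF hφ).obj P ⟶ N) ≃ (P ⟶ (ModuleCat.restrictScalars φ).obj N) where
  toFun g := ModuleCat.ofHom (Y := (ModuleCat.restrictScalars φ).obj N)
    { toFun := fun p => g.hom (qmk hφ P p)
      map_add' := by intro x y; rw [map_add]; exact g.hom.map_add _ _
      map_smul' := by
        intro c x
        rw [qmk_smul]
        exact g.hom.map_smul _ _ }
  invFun f := qlift hφ (N := N) (f.hom.toAddMonoidHom) (fun c p => f.hom.map_smul c p)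
  left_inv g := by
    apply q_hom_ext
    intro p
    rfl
  right_inv f := by
    ext p
    rfl

noncomputable def qAdj (hφ : Function.Surjective φ) : qF hφ ⊣ ModuleCat.restrictScalars.{0} φ :=
  Adjunction.mkOfHomEquiv
    { homEquiv := qEquiv hφ
      homEquiv_naturality_left_symm := by
        intro P Q N f g
        apply q_hom_ext
        intro p
        rfl
      homEquiv_naturality_right := by
        intro P N N' f g
        ext p
        rfl }

lemma qF_projective (hφ : Function.Surjective φ) (P : ModuleCat.{0} R) [hP : Projective P] :
    Projective ((qF hφ).obj P) := by
  have : (ModuleCat.restrictScalars.{0} φ).PreservesEpimorphisms := by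
    constructor
    intro X Y f hf
    rw [ModuleCat.epi_iff_surjective] at hf ⊢
    exact hf
  exact (qAdj hφ).map_projective P hP

variable (φ) in
def ExactQ {M : ModuleCat.{0} R} (P : ProjectiveResolution M) : Prop :=
  ∀ n (x : P.complex.X (n + 1)), (P.complex.d (n + 1) n).hom x ∈ KP φ (P.complex.X n) →
    ∃ w : P.complex.X (n + 2), x - (P.complex.d (n + 2) (n + 1)).hom w ∈ KP φ (P.complex.X (n + 1))

noncomputable def aug {M : ModuleCat.{0} R} (P : ProjectiveResolution M) : P.complex.X 0 ⟶ M :=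
  (ChainComplex.toSingle₀Equiv _ _ P.π).1

lemma aug_comp {M : ModuleCat.{0} R} (P : ProjectiveResolution M) :
    P.complex.d 1 0 ≫ aug P = 0 := (ChainComplex.toSingle₀Equiv _ _ P.π).2

lemma aug_exact {M : ModuleCat.{0} R} (P : ProjectiveResolution M) :
    (ShortComplex.mk _ _ (aug_comp P)).Exact := by
  have := P.isColimitCokernelCofork
  exact ShortComplex.exact_of_g_is_cokernel _ this

lemma aug_epi {M : ModuleCat.{0} R} (P : ProjectiveResolution M) : Epi (aug P) :=
  inferInstanceAs (Epi (P.π.f 0))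

lemma qaug_comp (hφ : Function.Surjective φ) (M : ModuleCat.{0} R')
    (P : ProjectiveResolution ((ModuleCat.restrictScalars φ).obj M)) :
    (qF hφ).map (P.complex.d 1 0) ≫ (qEquiv hφ _ _).symm (aug P) = 0 := by
  apply q_hom_ext
  intro p
  exact congrArg (fun f => f.hom p) (aug_comp P)

noncomputable def qRes (hφ : Function.Surjective φ) (M : ModuleCat.{0} R')
    (P : ProjectiveResolution ((ModuleCat.restrictScalars φ).obj M)) (hP : ExactQ φ P) :
    ProjectiveResolution M where
  complex := ((qF hφ).mapHomologicalComplex _).obj P.complex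
  projective n := qF_projective hφ (P.complex.X n)
  π := (ChainComplex.toSingle₀Equiv _ _).symm ⟨(qEquiv hφ _ _).symm (aug P), qaug_comp hφ M P⟩
  quasiIso := ⟨fun n => by
    cases n with
    | zero =>
      rw [ChainComplex.quasiIsoAt₀_iff, ShortComplex.quasiIso_iff_of_zeros']
      · have hex : (ShortComplex.mk _ _ (qaug_comp hφ M P)).Exact := by
          rw [ShortComplex.moduleCat_exact_iff]
          intro x hx
          obtain ⟨x, rfl⟩ := qmk_surj hφ _ x
          obtain ⟨w, hw⟩ := (ShortComplex.moduleCat_exact_iff _).1 (aug_exact P) x hx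
          exact ⟨qmk hφ _ w, congrArg (qmk hφ _) hw⟩
        have hepi : Epi ((qEquiv hφ _ _).symm (aug P)) := by
          rw [ModuleCat.epi_iff_surjective]
          intro m
          obtain ⟨x, hx⟩ := (ModuleCat.epi_iff_surjective _).1 (aug_epi P) m
          exact ⟨qmk hφ _ x, hx⟩
        refine (ShortComplex.exact_and_epi_g_iff_of_iso ?_).2 ⟨hex, hepi⟩
        exact ShortComplex.isoMk (Iso.refl _) (Iso.refl _) (Iso.refl _)
          ((Category.id_comp _).trans (Category.comp_id _).symm)
          ((Category.id_comp _).trans (Eq.trans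
            (ChainComplex.toSingle₀Equiv_symm_apply_f_zero
              (C := ((qF hφ).mapHomologicalComplex _).obj P.complex)
              ((qEquiv hφ _ _).symm (aug P)) (qaug_comp hφ M P)).symm (Category.comp_id _).symm))
      · change (qF hφ).map (P.complex.d 0 0) = 0
        rw [P.complex.shape 0 0 (by simp), Functor.map_zero]
      all_goals rfl
    | succ n =>
      rw [quasiIsoAt_iff_exactAt']
      · rw [HomologicalComplex.exactAt_iff' _ (n + 1 + 1) (n + 1) n (by simp) (by simp),
          ShortComplex.moduleCat_exact_iff]
        intro x hx
        obtain ⟨x, rfl⟩ := qmk_surj hφ _ x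
        obtain ⟨w, hw⟩ := hP n x ((qmk_eq_zero hφ _ _).1 hx)
        refine ⟨qmk hφ _ w, ?_⟩
        have h2 := (qmk_eq_zero hφ _ _).2 hw
        rw [map_sub, sub_eq_zero] at h2
        exact h2.symm
      · apply ChainComplex.exactAt_succ_single_obj⟩

variable {k : Type} [Field k] [Algebra k R] [Algebra k R']

noncomputable def qLin (hφ : Function.Surjective φ)
    (hk : ∀ c : k, φ (algebraMap k R c) = algebraMap k R' c)
    (P : ModuleCat.{0} R) (N : ModuleCat.{0} R') :
    ((qF hφ).obj P ⟶ N) ≃ₗ[k] (P ⟶ (ModuleCat.restrictScalars φ).obj N) :=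
  { qEquiv hφ P N with
    map_add' := by
      intro f g
      ext p
      rfl
    map_smul' := by
      intro c f
      ext p
      change algebraMap k R' c • f.hom (qmk hφ P p) = φ (algebraMap k R c) • f.hom (qmk hφ P p)
      rw [hk] }

noncomputable def qCpx (hφ : Function.Surjective φ)
    (hk : ∀ c : k, φ (algebraMap k R c) = algebraMap k R' c)
    (C : ChainComplex (ModuleCat.{0} R) ℕ) (N : ModuleCat.{0} R') :
    (C.linearYonedaObj k ((ModuleCat.restrictScalars φ).obj N)) ≅
      (ChainComplex.linearYonedaObj (((qF hφ).mapHomologicalComplex _).obj C) k N) :=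
  HomologicalComplex.Hom.isoOfComponents
    (fun n => (qLin hφ hk (C.X n) N).symm.toModuleIso) (by
      intro i j _
      ext f
      apply q_hom_ext
      intro p
      rfl)

lemma ext_iso (hφ : Function.Surjective φ)
    (hk : ∀ c : k, φ (algebraMap k R c) = algebraMap k R' c) (M N : ModuleCat.{0} R')
    (P : ProjectiveResolution ((ModuleCat.restrictScalars φ).obj M)) (hP : ExactQ φ P) (n : ℕ) :
    Nonempty
      ((((Ext k (ModuleCat.{0} R) n).obj
        (Opposite.op ((ModuleCat.restrictScalars φ).obj M))).obj
          ((ModuleCat.restrictScalars φ).obj N)) ≅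
        (((Ext k (ModuleCat.{0} R') n).obj (Opposite.op M)).obj N)) :=
  ⟨P.isoExt n _ ≪≫ (HomologicalComplex.homologyFunctor _ _ n).mapIso (qCpx hφ hk P.complex N) ≪≫
    ((qRes hφ M P hP).isoExt n N).symm⟩
end Fun

section Fin
variable {k : Type} [Field k] {S : Type} [Monoid S]

lemma mem_spanI (I : Set S) (x : MonoidAlgebra k S) :
    x ∈ Submodule.span k
      {y : MonoidAlgebra k S | ∃ s ∈ I, y = MonoidAlgebra.single s (1 : k)} ↔
    ∀ s ∉ I, x.coeff s = 0 := by
  constructor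
  · intro hx s hs
    induction hx using Submodule.span_induction with
    | zero => simp
    | add x y _ _ hx hy => simp [hx, hy]
    | smul c x _ hx => simp [hx]
    | mem x hx =>
      obtain ⟨t, ht, rfl⟩ := hx
      classical
      rw [MonoidAlgebra.coeff_single, Finsupp.single_apply, if_neg]
      rintro rfl
      exact hs ht
  · intro hx
    rw [← MonoidAlgebra.sum_coeff_single x, Finsupp.sum]
    refine Submodule.sum_mem _ fun s hs => ?_
    have : s ∈ I := by
      by_contra h
      exact (Finsupp.mem_support_iff.1 hs) (hx s h)
    have h2 : MonoidAlgebra.single s (x.coeff s) = x.coeff s • MonoidAlgebra.single s (1 : k) := by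
      simp
    rw [h2]
    exact Submodule.smul_mem _ _ (Submodule.subset_span ⟨s, this, rfl⟩)

lemma mem_spanI' {I : Set S} (hI : ∀ a ∈ I, ∀ s : S, a * s ∈ I ∧ s * a ∈ I)
    (x : MonoidAlgebra k S) :
    x ∈ Submodule.span k
      {y : MonoidAlgebra k S | ∃ s ∈ I, y = MonoidAlgebra.single s (1 : k)} ↔
    MulOpposite.op x ∈ PI k I (MonoidAlgebra k S)ᵐᵒᵖ := by
  rw [mem_spanI, mem_PI_self hI]; rfl

lemma KP_eq_PI {I : Set S} (hI : ∀ a ∈ I, ∀ s : S, a * s ∈ I ∧ s * a ∈ I)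
    {R' : Type} [Ring R'] (φ : (MonoidAlgebra k S)ᵐᵒᵖ →+* R')
    (h : ∀ a, φ a = 0 ↔ a ∈ PI k I (MonoidAlgebra k S)ᵐᵒᵖ)
    (P : Type) [AddCommGroup P] [Module (MonoidAlgebra k S)ᵐᵒᵖ P] :
    KP φ P = PI k I P := by
  apply le_antisymm
  · apply Submodule.span_le.2
    rintro x ⟨a, p, ha, rfl⟩
    exact PI_map I (LinearMap.toSpanSingleton _ _ p) ((h a).1 ha)
  · apply Submodule.span_le.2
    rintro x ⟨s, hs, p, rfl⟩
    refine KP_smul_mem ((h _).2 ?_) p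
    simpa using sg_smul_mem (k := k) hs (1 : (MonoidAlgebra k S)ᵐᵒᵖ)

end Fin

/-- let `S` be a finite regular monoid, `k` a field and `I ⊆ S` a two-sided
semigroup ideal.  Then the `k`-span `kI` of `I` in the monoid algebra `kS` is a two-sided
ideal of `kS`, and for every realization `B ≅ kS/kI` (a surjective `k`-algebra map
`π : kS → B` with kernel `kI`), all finitely generated right `B`-modules `M, N` and all
`n ≥ 0`, one has `Ext^n_{kS}(M, N) ≅ Ext^n_{kS/kI}(M, N)`. -/
theorem stmt5 (k : Type) [Field k] (S : Type) [Monoid S] [Finite S]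
    (hreg : ∀ s : S, ∃ t : S, s * t * s = s)
    (I : Set S) (hne : I.Nonempty)
    (hIdeal : ∀ a ∈ I, ∀ s : S, a * s ∈ I ∧ s * a ∈ I) :
    (∀ x ∈ Submodule.span k
        {y : MonoidAlgebra k S | ∃ s ∈ I, y = MonoidAlgebra.single s (1 : k)},
      ∀ b : MonoidAlgebra k S,
        x * b ∈ Submodule.span k
          {y : MonoidAlgebra k S | ∃ s ∈ I, y = MonoidAlgebra.single s (1 : k)} ∧
        b * x ∈ Submodule.span k
          {y : MonoidAlgebra k S | ∃ s ∈ I, y = MonoidAlgebra.single s (1 : k)}) ∧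
    (∀ (B : Type) [Ring B] [Algebra k B] (π : MonoidAlgebra k S →ₐ[k] B),
      Function.Surjective π →
      (RingHom.ker π : Set (MonoidAlgebra k S)) =
        (Submodule.span k
          {y : MonoidAlgebra k S | ∃ s ∈ I, y = MonoidAlgebra.single s (1 : k)} : Set _) →
      ∀ (M N : ModuleCat Bᵐᵒᵖ), Module.Finite Bᵐᵒᵖ M → Module.Finite Bᵐᵒᵖ N → ∀ n : ℕ,
        Nonempty
          ((((Ext k (ModuleCat (MonoidAlgebra k S)ᵐᵒᵖ) n).obj
                (Opposite.op ((ModuleCat.restrictScalars (RingHom.op π.toRingHom)).obj M))).obj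
              ((ModuleCat.restrictScalars (RingHom.op π.toRingHom)).obj N)) ≅
            (((Ext k (ModuleCat Bᵐᵒᵖ) n).obj (Opposite.op M)).obj N))) := by
  refine ⟨?_, ?_⟩
  · intro x hx b
    rw [mem_spanI' hIdeal] at hx
    rw [mem_spanI' hIdeal, mem_spanI' hIdeal]
    refine ⟨?_, ?_⟩
    · rw [MulOpposite.op_mul]
      exact Submodule.smul_mem _ _ hx
    · rw [MulOpposite.op_mul]
      exact PI_map I (LinearMap.toSpanSingleton _ _ (MulOpposite.op b)) hx
  · intro B _ _ π hπ hker M N _ _ n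
    have hφ : Function.Surjective (RingHom.op π.toRingHom) := by
      intro b
      obtain ⟨a, ha⟩ := hπ b.unop
      exact ⟨MulOpposite.op a, congrArg MulOpposite.op ha⟩
    have hk : ∀ c : k, (RingHom.op π.toRingHom) (algebraMap k (MonoidAlgebra k S)ᵐᵒᵖ c) =
        algebraMap k Bᵐᵒᵖ c := fun c => congrArg MulOpposite.op (π.commutes c)
    have h0 : ∀ a, (RingHom.op π.toRingHom) a = 0 ↔ a ∈ PI k I (MonoidAlgebra k S)ᵐᵒᵖ := by
      intro a
      have h1 : a.unop ∈ (RingHom.ker π : Set (MonoidAlgebra k S)) ↔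
          a ∈ PI k I (MonoidAlgebra k S)ᵐᵒᵖ := by
        rw [hker, SetLike.mem_coe, mem_spanI' hIdeal, MulOpposite.op_unop]
      rw [← h1, SetLike.mem_coe, RingHom.mem_ker]
      exact MulOpposite.op_eq_zero_iff (π a.unop)
    let P := ProjectiveResolution.of ((ModuleCat.restrictScalars (RingHom.op π.toRingHom)).obj M)
    refine ext_iso hφ hk M N P ?_ n
    have hproj : ∀ n, Module.Projective (MonoidAlgebra k S)ᵐᵒᵖ (P.complex.X n) := fun n =>
      (IsProjective.iff_projective _).2 (P.projective n)
    intro n x hx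
    rw [KP_eq_PI hIdeal _ h0] at hx ⊢
    refine main_exact (k := k) hreg (fun n => P.complex.X n)
      ((ModuleCat.restrictScalars (RingHom.op π.toRingHom)).obj M)
      (fun n => (P.complex.d (n + 1) n).hom) (aug P).hom ?_ ?_ ?_ I hIdeal ?_ n x hx
    · intro n x
      exact congrArg (fun f => f.hom x) (P.complex.d_comp_d (n + 2) (n + 1) n)
    · intro n x hx
      exact (ShortComplex.moduleCat_exact_iff _).1 (P.exact_succ n) x hx
    · intro x hx
      exact (ShortComplex.moduleCat_exact_iff _).1 (aug_exact P) x hx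
    · intro s hs m
      have h1 : (RingHom.op π.toRingHom) (sg k s) = 0 := by
        rw [h0]
        simpa using sg_smul_mem (k := k) hs (1 : (MonoidAlgebra k S)ᵐᵒᵖ)
      change (RingHom.op π.toRingHom) (sg k s) • (show M from m) = 0
      rw [h1, zero_smul]
end
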